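/- Let G be a hairball in simplest form whose cycle C_G has odd length and which is not itself just a cycle. Then the nim-value of graph chomp on G is determined as follows: (1) if v(G) is even, all vertices of C_G other than a single vertex A have degree 2, and A carries (outside the cycle) exactly a k-tail and a (k+1)-tail for some k ≥ 0, then g(G) = 4; (2) if v(G) is even and G is not of the form in (1), then g(G) = 0; (3) if v(G) is odd, then g(G) = 3. -/

import Mathlib

/-!
The nim-value of a hairball with odd cycle is computed without the simplest-form hypothesis, by
induction on the total length of its tails (`grundy_hair`). Let `T` be the formal sum, modulo `2`,
of the pairs (root, length) over all nonempty tails, so that two equal tails at the same vertex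
cancel. The value is `0` if `T = 0`; it is `4` if `T` consists of a `k`-tail and a `(k+1)`-tail at
one vertex (where a `0`-tail is void); otherwise it is `3` or `0` according to whether the total
length of the tails is even or odd.

A move on the cycle leaves a bipartite graph, and a bipartite graph with `v` vertices and `e` edges
has value `v % 2 + 2 * (e % 2)` (`grundy_bipartite`): in such a graph `v` odd yields a vertex of
even degree and `e` odd yields a vertex of odd degree, which provides the options required. A move
on a tail shortens that tail and splits off a path, so its value is the nim-sum of the value of a
smaller hairball and the value of a path (`grundy_move_vertex`, `grundy_move_edge`). Comparing
these options case by case gives the minimal excludant.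

To apply this to `G`, orient the vertices off the cycle towards the cycle. The cycle edges and
these parent edges are `|V|` distinct edges, hence all the edges of `G` (`exists_isHair`), and the
degree condition says that off the cycle every vertex is the parent of at most one vertex. So `G`
is a relabelling of a model hairball (`map_graphComplex`). If two tails of equal length had the
same root, exchanging them would be a nontrivial involution whose fixed points form a complex;
hence in simplest form nothing cancels in `T` (`eq_of_tailLen`), `T` is nonzero as soon as `G` is
not a cycle, and the second case for `T` is the configuration `HasTwoTails`.
-/

attribute [local instance] Classical.propDecidable

/-- The minimal excludant of a finite set of naturals. -/
noncomputable def mex (s : Finset ℕ) : ℕ := sInf {n : ℕ | n ∉ s}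

/-- The position resulting from choosing `σ` in subset take-away:
remove `σ` together with every element containing it. -/
noncomputable def takeawayMove {V : Type*} [DecidableEq V] (Δ : Finset (Finset V))
    (σ : Finset V) : Finset (Finset V) :=
  Δ.filter (fun t => ¬ σ ⊆ t)

/-- The Grundy (nim-)value of subset take-away played on `Δ`: the minimal excludant of the
Grundy values of all positions reachable in one move. -/
noncomputable def grundy {V : Type*} [DecidableEq V] (Δ : Finset (Finset V)) : ℕ :=
  mex (Δ.attach.image (fun σ => grundy (takeawayMove Δ σ.1)))
termination_by Δ.card
decreasing_by
  simp only [takeawayMove]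
  exact Finset.card_lt_card (Finset.filter_ssubset.mpr ⟨σ.1, σ.2, by simp⟩)

/-- The simplicial complex of vertices and edges of a finite simple graph `G`.
Graph chomp on `G` is subset take-away on this complex, so the nim-value of graph chomp
on `G` is `grundy (graphComplex G)`. -/
noncomputable def graphComplex {V : Type*} [Fintype V] [DecidableEq V] (G : SimpleGraph V) :
    Finset (Finset V) :=
  (Finset.univ : Finset V).image (fun v => ({v} : Finset V)) ∪
    Finset.univ.filter (fun s : Finset V => ∃ u v, G.Adj u v ∧ s = {u, v})

/-- A graph `G` is in *simplest form* if the only involution of its vertex set mapping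
edges to edges whose fixed point set (fixed vertices and fixed edges) is a simplicial
complex (i.e. both endpoints of every fixed edge are fixed vertices) is the identity. -/
def SimplestForm {V : Type*} [DecidableEq V] (G : SimpleGraph V) : Prop :=
  ∀ τ : Equiv.Perm V, τ ^ 2 = 1 →
    (∀ u v : V, G.Adj u v → G.Adj (τ u) (τ v)) →
    (∀ u v : V, G.Adj u v → ({τ u, τ v} : Finset V) = {u, v} → τ u = u ∧ τ v = v) →
    τ = 1

/-- The special configuration of part (1) of the hairball theorem: all vertices of the
cycle `c` other than a single vertex `A` have degree `2`, and `A` carries (outside the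
cycle) exactly a `k`-tail and a `(k+1)`-tail, i.e. two paths starting at `A` of lengths `k`
and `k + 1`, meeting the cycle and each other only in `A`, which together with the cycle
cover all vertices of `G`. -/
def HasTwoTails {V : Type*} (G : SimpleGraph V) {x : V} (c : G.Walk x x) : Prop :=
  ∃ (A : V) (k : ℕ) (u w : V) (P : G.Walk A u) (Q : G.Walk A w),
    A ∈ c.support ∧
    (∀ v ∈ c.support, v ≠ A → ∀ [Fintype (G.neighborSet v)], G.degree v = 2) ∧
    P.IsPath ∧ Q.IsPath ∧ P.length = k ∧ Q.length = k + 1 ∧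
    (∀ y ∈ P.support, y ∈ c.support → y = A) ∧
    (∀ y ∈ Q.support, y ∈ c.support → y = A) ∧
    (∀ y ∈ P.support, y ∈ Q.support → y = A) ∧
    (∀ y : V, y ∈ c.support ∨ y ∈ P.support ∨ y ∈ Q.support)

/-! ### Grundy values, nim-sums and bipartite graphs -/

theorem mex_eq_of {s : Finset ℕ} {m : ℕ} (h1 : m ∉ s) (h2 : ∀ j < m, j ∈ s) : mex s = m := by
  unfold mex
  apply le_antisymm
  · exact Nat.sInf_le h1
  · apply le_csInf ⟨m, h1⟩
    intro b hb
    by_contra h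
    exact hb (h2 b (by omega))

theorem mex_notMem (s : Finset ℕ) : mex s ∉ s := by
  have h : ({n : ℕ | n ∉ s}).Nonempty := s.exists_notMem
  exact Nat.sInf_mem h

theorem mem_of_lt_mex {s : Finset ℕ} {j : ℕ} (h : j < mex s) : j ∈ s := by
  by_contra hj
  exact absurd (Nat.sInf_le (s := {n : ℕ | n ∉ s}) hj) (by unfold mex at h; omega)

section Grundy
variable {V : Type*} [DecidableEq V]

theorem mem_takeawayMove {Δ : Finset (Finset V)} {σ t : Finset V} :
    t ∈ takeawayMove Δ σ ↔ t ∈ Δ ∧ ¬ σ ⊆ t := by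
  simp [takeawayMove]

theorem takeawayMove_card_lt {Δ : Finset (Finset V)} {σ : Finset V} (h : σ ∈ Δ) :
    (takeawayMove Δ σ).card < Δ.card :=
  Finset.card_lt_card (Finset.filter_ssubset.mpr ⟨σ, h, by simp⟩)

theorem grundy_eq_of {Δ : Finset (Finset V)} {m : ℕ}
    (h1 : ∀ σ ∈ Δ, grundy (takeawayMove Δ σ) ≠ m)
    (h2 : ∀ j < m, ∃ σ ∈ Δ, grundy (takeawayMove Δ σ) = j) : grundy Δ = m := by
  rw [grundy]
  apply mex_eq_of
  · simpa using h1
  · simpa using h2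

theorem grundy_move_ne {Δ : Finset (Finset V)} {σ : Finset V} (h : σ ∈ Δ) :
    grundy (takeawayMove Δ σ) ≠ grundy Δ := by
  intro he
  rw [grundy.eq_1 Δ] at he
  have := mex_notMem (Δ.attach.image (fun σ => grundy (takeawayMove Δ σ.1)))
  rw [← he] at this
  exact this (Finset.mem_image.2 ⟨⟨σ, h⟩, Finset.mem_attach _ _, rfl⟩)

theorem exists_move_of_lt {Δ : Finset (Finset V)} {j : ℕ} (h : j < grundy Δ) :
    ∃ σ ∈ Δ, grundy (takeawayMove Δ σ) = j := by
  rw [grundy] at h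
  simpa using mem_of_lt_mex h

/-- The Sprague–Grundy rule: if no face of `A` is comparable to a face of `B`, then the game on
`A ∪ B` is the sum of the two games, and nim-values add without carry. -/
theorem grundy_union (A B : Finset (Finset V)) (h : ∀ s ∈ A, ∀ t ∈ B, ¬ s ⊆ t ∧ ¬ t ⊆ s) :
    grundy (A ∪ B) = grundy A ^^^ grundy B := by
  have hA : ∀ σ ∈ A, takeawayMove (A ∪ B) σ = takeawayMove A σ ∪ B := by
    intro σ hσ
    ext t
    simp only [mem_takeawayMove, Finset.mem_union]
    have := h σ hσ t
    tauto
  have hB : ∀ σ ∈ B, takeawayMove (A ∪ B) σ = A ∪ takeawayMove B σ := by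
    intro σ hσ
    ext t
    simp only [mem_takeawayMove, Finset.mem_union]
    have := fun ht => h t ht σ hσ
    tauto
  have iA : ∀ σ ∈ A, grundy (takeawayMove (A ∪ B) σ)
      = grundy (takeawayMove A σ) ^^^ grundy B := by
    intro σ hσ
    rw [hA σ hσ]
    have hlt := takeawayMove_card_lt hσ
    exact grundy_union _ _ (fun s hs t ht => h s (mem_takeawayMove.1 hs).1 t ht)
  have iB : ∀ σ ∈ B, grundy (takeawayMove (A ∪ B) σ)
      = grundy A ^^^ grundy (takeawayMove B σ) := by
    intro σ hσ
    rw [hB σ hσ]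
    have hlt := takeawayMove_card_lt hσ
    exact grundy_union _ _ (fun s hs t ht => h s hs t (mem_takeawayMove.1 ht).1)
  apply grundy_eq_of
  · intro σ hσ
    rcases Finset.mem_union.1 hσ with hσ | hσ
    · rw [iA σ hσ]
      exact fun he => grundy_move_ne hσ (Nat.xor_left_injective he)
    · rw [iB σ hσ]
      exact fun he => grundy_move_ne hσ (Nat.xor_right_injective he)
  · intro j hj
    rcases Nat.lt_xor_cases hj with hlt | hlt
    · obtain ⟨σ, hσ, he⟩ := exists_move_of_lt hlt
      exact ⟨σ, Finset.mem_union_left _ hσ, by rw [iA σ hσ, he, Nat.xor_xor_cancel_right]⟩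
    · obtain ⟨σ, hσ, he⟩ := exists_move_of_lt hlt
      exact ⟨σ, Finset.mem_union_right _ hσ, by
        rw [iB σ hσ, he, Nat.xor_comm j, Nat.xor_xor_cancel_left]⟩
termination_by A.card + B.card

/-- The nim-value does not depend on the names of the vertices. -/
theorem grundy_map {W : Type*} [DecidableEq W] (e : V ↪ W) (Δ : Finset (Finset V)) :
    grundy (Δ.map (Finset.mapEmbedding e).toEmbedding) = grundy Δ := by
  have key : ∀ σ ∈ Δ, grundy (takeawayMove (Δ.map (Finset.mapEmbedding e).toEmbedding) (σ.map e))
      = grundy (takeawayMove Δ σ) := by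
    intro σ hσ
    have hlt := takeawayMove_card_lt hσ
    rw [← grundy_map e (takeawayMove Δ σ)]
    congr 1
    ext t
    simp only [mem_takeawayMove, Finset.mem_map]
    constructor
    · rintro ⟨⟨s, hs, rfl⟩, hn⟩
      exact ⟨s, ⟨hs, fun h => hn (Finset.map_subset_map.2 h)⟩, rfl⟩
    · rintro ⟨s, ⟨hs, hn⟩, rfl⟩
      exact ⟨⟨s, hs, rfl⟩, fun h => hn (Finset.map_subset_map.1 h)⟩
  apply grundy_eq_of
  · intro τ hτ
    obtain ⟨σ, hσ, rfl⟩ := Finset.mem_map.1 hτ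
    exact fun he => grundy_move_ne hσ ((key σ hσ).symm.trans he)
  · intro j hj
    obtain ⟨σ, hσ, he⟩ := exists_move_of_lt hj
    exact ⟨σ.map e, Finset.mem_map.2 ⟨σ, hσ, rfl⟩, (key σ hσ).trans he⟩
termination_by Δ.card

/-- A finite simplicial complex of dimension at most one: a finite simple graph. -/
def IsGr (Δ : Finset (Finset V)) : Prop :=
  (∀ s ∈ Δ, s.card = 1 ∨ s.card = 2) ∧ ∀ s ∈ Δ, ∀ v ∈ s, {v} ∈ Δ

/-- The vertices of a complex, as singletons. -/
noncomputable def vs (Δ : Finset (Finset V)) : Finset (Finset V) := Δ.filter (fun s => s.card = 1)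

/-- The edges of a complex. -/
noncomputable def es (Δ : Finset (Finset V)) : Finset (Finset V) := Δ.filter (fun s => s.card = 2)

/-- The number of edges of a complex that contain `v`. -/
noncomputable def degr (Δ : Finset (Finset V)) (v : V) : ℕ := ((es Δ).filter (fun s => v ∈ s)).card

theorem IsGr.takeawayMove {Δ : Finset (Finset V)} (h : IsGr Δ) (σ : Finset V) :
    IsGr (takeawayMove Δ σ) := by
  refine ⟨fun s hs => h.1 s (mem_takeawayMove.1 hs).1, fun s hs v hv => ?_⟩
  rw [mem_takeawayMove] at hs ⊢
  refine ⟨h.2 s hs.1 v hv, fun hh => hs.2 (hh.trans (by simpa using hv))⟩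

theorem card_es_move_vertex (Δ : Finset (Finset V)) (v : V) :
    (es (takeawayMove Δ {v})).card + degr Δ v = (es Δ).card := by
  rw [degr, ← Finset.card_filter_add_card_filter_not (s := es Δ) (fun s => v ∈ s), add_comm]
  congr 2
  ext s
  simp [es, takeawayMove, and_right_comm, and_assoc]

theorem card_vs_move_vertex (Δ : Finset (Finset V)) {v : V} (hv : {v} ∈ Δ) :
    (vs (takeawayMove Δ {v})).card + 1 = (vs Δ).card := by
  have : vs (takeawayMove Δ {v}) = (vs Δ).erase {v} := by
    ext s
    simp only [vs, takeawayMove, Finset.mem_filter, Finset.mem_erase, Finset.card_eq_one]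
    constructor
    · rintro ⟨⟨h1, h2⟩, h3⟩
      exact ⟨by rintro rfl; simp at h2, h1, h3⟩
    · rintro ⟨h1, h2, w, rfl⟩
      refine ⟨⟨h2, ?_⟩, w, rfl⟩
      simp only [Finset.singleton_subset_iff, Finset.mem_singleton]
      rintro rfl
      exact h1 rfl
  rw [this, Finset.card_erase_add_one (by simp [vs, hv])]

theorem vs_move_edge (Δ : Finset (Finset V)) {s : Finset V} (hs : s.card = 2) :
    vs (takeawayMove Δ s) = vs Δ := by
  ext t
  simp only [vs, takeawayMove, Finset.mem_filter]
  constructor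
  · tauto
  · rintro ⟨h1, h2⟩
    refine ⟨⟨h1, fun h => ?_⟩, h2⟩
    have := Finset.card_le_card h
    omega

theorem card_es_move_edge (Δ : Finset (Finset V)) {s : Finset V} (hs : s.card = 2) (hm : s ∈ Δ) :
    (es (takeawayMove Δ s)).card + 1 = (es Δ).card := by
  have : es (takeawayMove Δ s) = (es Δ).erase s := by
    ext t
    simp only [es, takeawayMove, Finset.mem_filter, Finset.mem_erase]
    constructor
    · rintro ⟨⟨h1, h2⟩, h3⟩
      exact ⟨by rintro rfl; simp at h2, h1, h3⟩
    · rintro ⟨h1, h2, h3⟩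
      refine ⟨⟨h2, fun h => h1 ?_⟩, h3⟩
      exact (Finset.eq_of_subset_of_card_le h (by omega)).symm
  rw [this, Finset.card_erase_add_one (by simp [es, hm, hs])]

/-- Handshake over the vertices satisfying `P`, when every edge has exactly `m` such vertices. -/
theorem sum_degr (Δ : Finset (Finset V)) (P : V → Prop) [DecidablePred P] (m : ℕ)
    (hm : ∀ s ∈ es Δ, (s.filter P).card = m) :
    ∑ v ∈ (Δ.biUnion id).filter P, degr Δ v = m * (es Δ).card := by
  have := Finset.sum_card_bipartiteAbove_eq_sum_card_bipartiteBelow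
    (s := (Δ.biUnion id).filter P) (t := es Δ) (fun v s => v ∈ s)
  simp only [Finset.bipartiteAbove, Finset.bipartiteBelow] at this
  simp only [degr]
  rw [this, Finset.sum_congr rfl (g := fun _ => m), Finset.sum_const, smul_eq_mul, mul_comm]
  intro s hs
  rw [← hm s hs]
  congr 1
  ext v
  simp only [Finset.mem_filter, Finset.mem_biUnion, id]
  have : s ∈ Δ := (Finset.mem_filter.1 hs).1
  constructor
  · tauto
  · rintro ⟨h1, h2⟩
    exact ⟨⟨⟨s, this, h1⟩, h2⟩, h1⟩

theorem card_vs {Δ : Finset (Finset V)} (h : IsGr Δ) : (vs Δ).card = (Δ.biUnion id).card := by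
  have : vs Δ = (Δ.biUnion id).map ⟨fun v => {v}, Finset.singleton_injective⟩ := by
    ext s
    simp only [vs, Finset.mem_filter, Finset.mem_map, Finset.mem_biUnion, id,
      Finset.card_eq_one, Function.Embedding.coeFn_mk]
    constructor
    · rintro ⟨hs, v, rfl⟩
      exact ⟨v, ⟨_, hs, by simp⟩, rfl⟩
    · rintro ⟨v, ⟨s, hs, hv⟩, rfl⟩
      exact ⟨h.2 s hs v hv, v, rfl⟩
  rw [this, Finset.card_map]

theorem mem_biUnion_id {Δ : Finset (Finset V)} (h : IsGr Δ) {v : V} :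
    v ∈ Δ.biUnion id ↔ {v} ∈ Δ := by
  simp only [Finset.mem_biUnion, id]
  exact ⟨fun ⟨s, hs, hv⟩ => h.2 s hs v hv, fun hv => ⟨_, hv, by simp⟩⟩

/-- In a bipartite graph with an odd number of edges some vertex has odd degree: the degrees in
one colour class add up to the number of edges. -/
theorem exists_odd_degr {Δ : Finset (Finset V)} (h : IsGr Δ) (χ : V → Bool)
    (hχ : ∀ s ∈ Δ, ∀ u ∈ s, ∀ v ∈ s, χ u = χ v → u = v) (hodd : (es Δ).card % 2 = 1) :
    ∃ v, {v} ∈ Δ ∧ degr Δ v % 2 = 1 := by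
  have hs := sum_degr Δ (fun v => χ v = true) 1 (by
    intro s hs
    obtain ⟨hs1, hs2⟩ := Finset.mem_filter.1 hs
    obtain ⟨u, v, huv, rfl⟩ := Finset.card_eq_two.1 hs2
    have := hχ _ hs1 u (by simp) v (by simp)
    cases hu : χ u <;> cases hv : χ v <;> simp_all [Finset.filter_insert, Finset.filter_singleton])
  by_contra! hc
  have : (1 * (es Δ).card) % 2 = 0 := by
    refine hs ▸ Nat.mod_eq_zero_of_dvd (Finset.dvd_sum ?_)
    intro v hv
    have := hc v ((mem_biUnion_id h).1 (Finset.filter_subset _ _ hv))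
    omega
  omega

/-- A graph with an odd number of vertices has a vertex of even degree, by the handshake lemma. -/
theorem exists_even_degr {Δ : Finset (Finset V)} (h : IsGr Δ) (hodd : (vs Δ).card % 2 = 1) :
    ∃ v, {v} ∈ Δ ∧ degr Δ v % 2 = 0 := by
  have hs := sum_degr Δ (fun v => True) 2 (by
    intro s hs
    simpa using (Finset.mem_filter.1 hs).2)
  rw [Finset.filter_true] at hs
  by_contra! hc
  have : (∑ v ∈ Δ.biUnion id, degr Δ v) % 2 = (vs Δ).card % 2 := by
    rw [Finset.sum_nat_mod, Finset.sum_congr rfl (g := fun _ => 1), card_vs h]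
    · simp
    intro v hv
    have := hc v ((mem_biUnion_id h).1 hv)
    omega
  omega

/-- The nim-value of a bipartite graph: it depends only on the parities of the numbers of
vertices and of edges. -/
theorem grundy_bipartite (Δ : Finset (Finset V)) (h : IsGr Δ) (χ : V → Bool)
    (hχ : ∀ s ∈ Δ, ∀ u ∈ s, ∀ v ∈ s, χ u = χ v → u = v) :
    grundy Δ = (vs Δ).card % 2 + 2 * ((es Δ).card % 2) := by
  have ih : ∀ σ ∈ Δ, grundy (takeawayMove Δ σ)
      = (vs (takeawayMove Δ σ)).card % 2 + 2 * ((es (takeawayMove Δ σ)).card % 2) := by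
    intro σ hσ
    have hlt := takeawayMove_card_lt hσ
    exact grundy_bipartite _ (h.takeawayMove σ) χ fun s hs => hχ s (mem_takeawayMove.1 hs).1
  apply grundy_eq_of
  · intro σ hσ
    rw [ih σ hσ]
    rcases h.1 σ hσ with h1 | h2
    · obtain ⟨v, rfl⟩ := Finset.card_eq_one.1 h1
      have := card_vs_move_vertex Δ hσ
      omega
    · have := card_es_move_edge Δ h2 hσ
      rw [vs_move_edge Δ h2]
      omega
  · intro j hj
    have hedge : (es Δ).card % 2 = 1 → ∃ σ ∈ Δ, grundy (takeawayMove Δ σ) = (vs Δ).card % 2 := by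
      intro ho
      obtain ⟨s, hs⟩ : (es Δ).Nonempty := by
        rw [← Finset.card_pos]; omega
      obtain ⟨hs1, hs2⟩ := Finset.mem_filter.1 hs
      refine ⟨s, hs1, ?_⟩
      have := card_es_move_edge Δ hs2 hs1
      rw [ih s hs1, vs_move_edge Δ hs2]
      omega
    have hvert : ∀ v, {v} ∈ Δ → grundy (takeawayMove Δ {v})
        = ((vs Δ).card + 1) % 2 + 2 * (((es Δ).card + degr Δ v) % 2) := by
      intro v hv
      have := card_vs_move_vertex Δ hv
      have := card_es_move_vertex Δ v
      rw [ih _ hv]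
      omega
    rcases Nat.mod_two_eq_zero_or_one (vs Δ).card with hv | hv <;>
      rcases Nat.mod_two_eq_zero_or_one (es Δ).card with he | he
    · omega
    · obtain ⟨w, hw, hd⟩ := exists_odd_degr h χ hχ he
      obtain rfl | rfl : j = 0 ∨ j = 1 := by omega
      · simpa [hv] using hedge he
      · exact ⟨{w}, hw, by rw [hvert w hw]; omega⟩
    · obtain ⟨u, hu, hd⟩ := exists_even_degr h hv
      exact ⟨{u}, hu, by rw [hvert u hu]; omega⟩
    · obtain ⟨w, hw, hd⟩ := exists_odd_degr h χ hχ he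
      obtain ⟨u, hu, hd'⟩ := exists_even_degr h hv
      obtain rfl | rfl | rfl : j = 0 ∨ j = 1 ∨ j = 2 := by omega
      · exact ⟨{w}, hw, by rw [hvert w hw]; omega⟩
      · simpa [hv] using hedge he
      · exact ⟨{u}, hu, by rw [hvert u hu]; omega⟩
termination_by Δ.card

end Grundy

/-! ### The model hairball and its moves -/

section Model
variable {ι : Type*}

/-- The successor of `m` on the cycle `0, 1, …, n - 1`. -/
def nxt (n m : ℕ) : ℕ := if m + 1 = n then 0 else m + 1

/-- The vertex at distance `k` from the cycle on tail `i`; at `k = 0` this is the cycle vertex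
`r i` that carries the tail. -/
def node (r : ι → ℕ) (i : ι) : ℕ → ℕ ⊕ (ι × ℕ)
  | 0 => Sum.inl (r i)
  | k + 1 => Sum.inr (i, k)

theorem node_eq_inr {r : ι → ℕ} {i i' : ι} {k k' : ℕ} :
    node r i' k' = Sum.inr (i, k) ↔ i' = i ∧ k' = k + 1 := by
  cases k' <;> simp [node]

theorem node_eq_inl {r : ι → ℕ} {i : ι} {k a : ℕ} :
    node r i k = Sum.inl a ↔ k = 0 ∧ r i = a := by
  cases k <;> simp [node]

theorem inr_eq_node {r : ι → ℕ} {i i' : ι} {k k' : ℕ} :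
    Sum.inr (i, k) = node r i' k' ↔ i' = i ∧ k' = k + 1 := by
  rw [eq_comm, node_eq_inr]

theorem inl_eq_node {r : ι → ℕ} {i : ι} {k a : ℕ} :
    Sum.inl a = node r i k ↔ k = 0 ∧ r i = a := by
  rw [eq_comm, node_eq_inl]

/-- A piece of tail `i`, cut off from the cycle: the path on `Sum.inr (i, k)`, `j ≤ k < l`. -/
noncomputable def piece (i : ι) (j l : ℕ) : Finset (Finset (ℕ ⊕ (ι × ℕ))) :=
  (Finset.Ico j l).image (fun k => {Sum.inr (i, k)}) ∪
  (Finset.Ico j (l - 1)).image (fun k => {Sum.inr (i, k), Sum.inr (i, k + 1)})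

theorem mem_piece {i : ι} {j l : ℕ} {s : Finset (ℕ ⊕ (ι × ℕ))} :
    s ∈ piece i j l ↔
      (∃ k, j ≤ k ∧ k < l ∧ s = {Sum.inr (i, k)}) ∨
      (∃ k, j ≤ k ∧ k + 1 < l ∧ s = {Sum.inr (i, k), Sum.inr (i, k + 1)}) := by
  simp only [piece, Finset.mem_union, Finset.mem_image, Finset.mem_Ico, eq_comm (b := s),
    and_assoc, Nat.lt_sub_iff_add_lt]

theorem tail_pair_inj {r : ι → ℕ} {i i' : ι} {k k' : ℕ}
    (h : ({node r i k, Sum.inr (i, k)} : Finset (ℕ ⊕ (ι × ℕ))) = {node r i' k', Sum.inr (i', k')}) :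
    i = i' ∧ k = k' := by
  have h1 : (Sum.inr (i, k) : ℕ ⊕ (ι × ℕ)) ∈ ({node r i' k', Sum.inr (i', k')} : Finset _) :=
    h ▸ (by simp)
  have h2 : (Sum.inr (i', k') : ℕ ⊕ (ι × ℕ)) ∈ ({node r i k, Sum.inr (i, k)} : Finset _) :=
    h ▸ (by simp)
  simp only [Finset.mem_insert, Finset.mem_singleton, inr_eq_node, Sum.inr.injEq,
    Prod.mk.injEq] at h1 h2
  rcases h1 with h1 | h1
  · rcases h2 with h2 | h2
    · omega
    · omega
  · exact h1

variable [Fintype ι]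

/-- The model hairball: a cycle `Sum.inl 0, …, Sum.inl (n - 1)`, and for every `i : ι` a tail
`Sum.inr (i, 0), …, Sum.inr (i, len i - 1)` attached at `Sum.inl (r i)`. -/
noncomputable def hair (n : ℕ) (r len : ι → ℕ) : Finset (Finset (ℕ ⊕ (ι × ℕ))) :=
  ((Finset.range n).image (fun m => {Sum.inl m}) ∪
    (Finset.univ.sigma (fun i => Finset.range (len i))).image (fun p => {Sum.inr (p.1, p.2)})) ∪
  ((Finset.range n).image (fun m => {Sum.inl m, Sum.inl (nxt n m)}) ∪
    (Finset.univ.sigma (fun i => Finset.range (len i))).image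
      (fun p => {node r p.1 p.2, Sum.inr (p.1, p.2)}))

theorem mem_hair {n : ℕ} {r len : ι → ℕ} {s : Finset (ℕ ⊕ (ι × ℕ))} :
    s ∈ hair n r len ↔
      (∃ m < n, s = {Sum.inl m}) ∨ (∃ i, ∃ k < len i, s = {Sum.inr (i, k)}) ∨
      (∃ m < n, s = {Sum.inl m, Sum.inl (nxt n m)}) ∨
      (∃ i, ∃ k < len i, s = {node r i k, Sum.inr (i, k)}) := by
  simp only [hair, Finset.mem_union, Finset.mem_image, Finset.mem_range, Finset.mem_sigma,
    Finset.mem_univ, true_and, Sigma.exists, or_assoc, eq_comm (b := s)]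

theorem nxt_cases (n m : ℕ) :
    (nxt n m = 0 ∧ m + 1 = n) ∨ (nxt n m = m + 1 ∧ m + 1 ≠ n) := by
  unfold nxt; split <;> tauto

theorem nxt_ne {n m : ℕ} (hn : 3 ≤ n) : m ≠ nxt n m := by
  unfold nxt; split <;> omega

theorem nxt_lt {n m : ℕ} (h : m < n) : nxt n m < n := by
  unfold nxt; split <;> omega

theorem isGr_hair {n : ℕ} (hn : 3 ≤ n) {r : ι → ℕ} (hr : ∀ i, r i < n) (len : ι → ℕ) :
    IsGr (hair n r len) := by
  constructor
  · intro s hs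
    rcases mem_hair.1 hs with ⟨m, hm, rfl⟩ | ⟨i, k, hk, rfl⟩ | ⟨m, hm, rfl⟩ | ⟨i, k, hk, rfl⟩
    · simp
    · simp
    · right
      exact Finset.card_pair (by simpa using nxt_ne hn)
    · right
      exact Finset.card_pair (by simp [node_eq_inr])
  · intro s hs v hv
    rw [mem_hair]
    rcases mem_hair.1 hs with ⟨m, hm, rfl⟩ | ⟨i, k, hk, rfl⟩ | ⟨m, hm, rfl⟩ | ⟨i, k, hk, rfl⟩
    · exact Or.inl ⟨m, hm, by simpa using hv⟩
    · exact Or.inr (Or.inl ⟨i, k, hk, by simpa using hv⟩)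
    · rcases Finset.mem_insert.1 hv with rfl | hv
      · exact Or.inl ⟨m, hm, rfl⟩
      · exact Or.inl ⟨_, nxt_lt hm, by simpa using hv⟩
    · rcases Finset.mem_insert.1 hv with rfl | hv
      · cases k with
        | zero => exact Or.inl ⟨_, hr i, rfl⟩
        | succ k => exact Or.inr (Or.inl ⟨i, k, by omega, rfl⟩)
      · exact Or.inr (Or.inl ⟨i, k, hk, by simpa using hv⟩)

theorem vs_hair {n : ℕ} (hn : 3 ≤ n) (r len : ι → ℕ) : vs (hair n r len) =
    (Finset.range n).image (fun m => {Sum.inl m}) ∪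
    (Finset.univ.sigma (fun i => Finset.range (len i))).image (fun p => {Sum.inr (p.1, p.2)}) := by
  rw [vs, hair, Finset.filter_union, Finset.filter_true_of_mem, Finset.filter_false_of_mem,
    Finset.union_empty]
  · intro s hs
    simp only [Finset.mem_union, Finset.mem_image] at hs
    rcases hs with ⟨m, -, rfl⟩ | ⟨p, -, rfl⟩
    · rw [Finset.card_pair (by simpa using nxt_ne hn)]; simp
    · rw [Finset.card_pair (by simp [node_eq_inr])]; simp
  · intro s hs
    simp only [Finset.mem_union, Finset.mem_image] at hs
    rcases hs with ⟨m, -, rfl⟩ | ⟨p, -, rfl⟩ <;> simp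

theorem es_hair {n : ℕ} (hn : 3 ≤ n) (r len : ι → ℕ) : es (hair n r len) =
    (Finset.range n).image (fun m => {Sum.inl m, Sum.inl (nxt n m)}) ∪
    (Finset.univ.sigma (fun i => Finset.range (len i))).image
      (fun p => {node r p.1 p.2, Sum.inr (p.1, p.2)}) := by
  rw [es, hair, Finset.filter_union, Finset.filter_false_of_mem, Finset.filter_true_of_mem,
    Finset.empty_union]
  · intro s hs
    simp only [Finset.mem_union, Finset.mem_image] at hs
    rcases hs with ⟨m, -, rfl⟩ | ⟨p, -, rfl⟩
    · rw [Finset.card_pair (by simpa using nxt_ne hn)]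
    · rw [Finset.card_pair (by simp [node_eq_inr])]
  · intro s hs
    simp only [Finset.mem_union, Finset.mem_image] at hs
    rcases hs with ⟨m, -, rfl⟩ | ⟨p, -, rfl⟩ <;> simp

theorem card_vs_hair {n : ℕ} (hn : 3 ≤ n) (r len : ι → ℕ) :
    (vs (hair n r len)).card = n + ∑ i, len i := by
  rw [vs_hair hn, Finset.card_union_of_disjoint, Finset.card_image_of_injective,
    Finset.card_image_of_injective]
  · simp
  · rintro ⟨i, k⟩ ⟨i', k'⟩ h
    simp only [Finset.singleton_inj, Sum.inr.injEq, Prod.mk.injEq] at h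
    obtain ⟨rfl, rfl⟩ := h; rfl
  · intro a b h
    simpa using h
  · rw [Finset.disjoint_left]
    rintro s hs hs'
    obtain ⟨m, -, rfl⟩ := Finset.mem_image.1 hs
    obtain ⟨p, -, h⟩ := Finset.mem_image.1 hs'
    simp at h

theorem nxt_pair_inj {n : ℕ} (hn : 3 ≤ n) {m m' : ℕ} (hm : m < n) (hm' : m' < n)
    (h : ({Sum.inl m, Sum.inl (nxt n m)} : Finset (ℕ ⊕ (ι × ℕ))) = {Sum.inl m', Sum.inl (nxt n m')}) :
    m = m' := by
  have h1 : (Sum.inl m : ℕ ⊕ (ι × ℕ)) ∈ ({Sum.inl m', Sum.inl (nxt n m')} : Finset (ℕ ⊕ (ι × ℕ))) :=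
    h ▸ (by simp)
  have h2 : (Sum.inl (nxt n m) : ℕ ⊕ (ι × ℕ)) ∈
      ({Sum.inl m', Sum.inl (nxt n m')} : Finset (ℕ ⊕ (ι × ℕ))) := h ▸ (by simp)
  simp only [Finset.mem_insert, Finset.mem_singleton, Sum.inl.injEq] at h1 h2
  have := nxt_cases n m
  have := nxt_cases n m'
  omega

theorem card_es_hair {n : ℕ} (hn : 3 ≤ n) (r len : ι → ℕ) :
    (es (hair n r len)).card = n + ∑ i, len i := by
  rw [es_hair hn, Finset.card_union_of_disjoint, Finset.card_image_of_injOn,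
    Finset.card_image_of_injective]
  · simp
  · rintro ⟨i, k⟩ ⟨i', k'⟩ h
    obtain ⟨rfl, rfl⟩ := tail_pair_inj h; rfl
  · intro a ha b hb h
    simp only [Finset.coe_range, Set.mem_Iio] at ha hb
    exact nxt_pair_inj hn ha hb h
  · rw [Finset.disjoint_left]
    rintro s hs hs'
    obtain ⟨m, -, rfl⟩ := Finset.mem_image.1 hs
    obtain ⟨p, -, h⟩ := Finset.mem_image.1 hs'
    have : (Sum.inr (p.1, p.2) : ℕ ⊕ (ι × ℕ)) ∈ ({Sum.inl m, Sum.inl (nxt n m)} : Finset _) :=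
      h ▸ (by simp)
    simp at this

theorem degr_hair {n : ℕ} (hn : 3 ≤ n) (r len : ι → ℕ) {a : ℕ} (ha : a < n) :
    degr (hair n r len) (Sum.inl a)
      = 2 + (Finset.univ.filter (fun i => r i = a ∧ 0 < len i)).card := by
  have : (es (hair n r len)).filter (fun s => Sum.inl a ∈ s) =
      ({a, if a = 0 then n - 1 else a - 1} : Finset ℕ).image
        (fun m => {Sum.inl m, Sum.inl (nxt n m)}) ∪
      (Finset.univ.filter (fun i => r i = a ∧ 0 < len i)).image
        (fun i => {node r i 0, Sum.inr (i, 0)}) := by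
    ext s
    rw [es_hair hn]
    simp only [Finset.mem_filter, Finset.mem_union, Finset.mem_image, Finset.mem_range,
      Finset.mem_sigma, Finset.mem_univ, true_and]
    constructor
    · rintro ⟨⟨m, hm, rfl⟩ | ⟨p, hp, rfl⟩, h⟩
      · left
        refine ⟨m, ?_, rfl⟩
        simp only [Finset.mem_insert, Finset.mem_singleton, Sum.inl.injEq, nxt] at h ⊢
        split_ifs at h ⊢ <;> omega
      · right
        simp only [Finset.mem_insert, Finset.mem_singleton, inl_eq_node, reduceCtorEq,
          or_false] at h
        exact ⟨p.1, ⟨h.2, by omega⟩, by rw [h.1]⟩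
    · rintro (⟨m, hm, rfl⟩ | ⟨i, hi, rfl⟩)
      · have : m < n ∧ (a = m ∨ a = nxt n m) := by
          simp only [Finset.mem_insert, Finset.mem_singleton, nxt] at hm ⊢
          split_ifs at hm ⊢ <;> omega
        exact ⟨Or.inl ⟨m, this.1, rfl⟩, by simpa using this.2⟩
      · exact ⟨Or.inr ⟨⟨i, 0⟩, hi.2, rfl⟩, by simp [inl_eq_node, hi.1]⟩
  rw [degr, this, Finset.card_union_of_disjoint, Finset.card_image_of_injOn,
    Finset.card_image_of_injective, Finset.card_pair]
  · split_ifs <;> omega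
  · intro i i' h
    exact (tail_pair_inj h).1
  · intro m hm m' hm' h
    simp only [Finset.coe_insert, Finset.coe_singleton, Set.mem_insert_iff,
      Set.mem_singleton_iff] at hm hm'
    exact nxt_pair_inj hn (by split_ifs at hm <;> omega) (by split_ifs at hm' <;> omega) h
  · rw [Finset.disjoint_left]
    rintro s hs hs'
    obtain ⟨m, -, rfl⟩ := Finset.mem_image.1 hs
    obtain ⟨i, -, h⟩ := Finset.mem_image.1 hs'
    have : (Sum.inr (i, 0) : ℕ ⊕ (ι × ℕ)) ∈ ({Sum.inl m, Sum.inl (nxt n m)} : Finset _) :=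
      h ▸ (by simp)
    simp at this

/-- The nim-value of a path with `m` vertices. -/
def pv (m : ℕ) : ℕ := if m = 0 then 0 else if m % 2 = 1 then 1 else 2

theorem grundy_piece (i : ι) (j l : ℕ) : grundy (piece i j l) = pv (l - j) := by
  have hg : IsGr (piece i j l) := by
    constructor
    · intro s hs
      rcases mem_piece.1 hs with ⟨k, h1, h2, rfl⟩ | ⟨k, h1, h2, rfl⟩
      · simp
      · right; exact Finset.card_pair (by simp)
    · intro s hs v hv
      rw [mem_piece]
      rcases mem_piece.1 hs with ⟨k, h1, h2, rfl⟩ | ⟨k, h1, h2, rfl⟩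
      · exact Or.inl ⟨k, h1, h2, by simpa using hv⟩
      · rcases Finset.mem_insert.1 hv with rfl | hv
        · exact Or.inl ⟨k, h1, by omega, rfl⟩
        · exact Or.inl ⟨k + 1, by omega, h2, by simpa using hv⟩
  have hv : (vs (piece i j l)).card = l - j := by
    have : vs (piece i j l) = (Finset.Ico j l).image (fun k => {Sum.inr (i, k)}) := by
      rw [vs, piece, Finset.filter_union, Finset.filter_true_of_mem, Finset.filter_false_of_mem,
        Finset.union_empty]
      · intro s hs
        obtain ⟨m, -, rfl⟩ := Finset.mem_image.1 hs
        rw [Finset.card_pair (by simp)]; simp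
      · intro s hs
        obtain ⟨m, -, rfl⟩ := Finset.mem_image.1 hs
        simp
    rw [this, Finset.card_image_of_injective, Nat.card_Ico]
    intro a b h
    simpa using h
  have he : (es (piece i j l)).card = l - 1 - j := by
    have : es (piece i j l) = (Finset.Ico j (l - 1)).image
        (fun k => {Sum.inr (i, k), Sum.inr (i, k + 1)}) := by
      rw [es, piece, Finset.filter_union, Finset.filter_false_of_mem, Finset.filter_true_of_mem,
        Finset.empty_union]
      · intro s hs
        obtain ⟨m, -, rfl⟩ := Finset.mem_image.1 hs
        rw [Finset.card_pair (by simp)]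
      · intro s hs
        obtain ⟨m, -, rfl⟩ := Finset.mem_image.1 hs
        simp
    rw [this, Finset.card_image_of_injective, Nat.card_Ico]
    intro a b h
    exact Nat.succ_injective (tail_pair_inj (r := fun _ => 0) (k := a + 1) (k' := b + 1) h).2
  rw [grundy_bipartite (piece i j l) hg
    (fun w => Sum.elim (fun _ => true) (fun p => p.2.bodd) w), hv, he]
  · unfold pv
    split_ifs <;> omega
  · intro s hs u hu v hv
    rcases mem_piece.1 hs with ⟨k, h1, h2, rfl⟩ | ⟨k, h1, h2, rfl⟩
    · simp only [Finset.mem_singleton] at hu hv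
      simp [hu, hv]
    · simp only [Finset.mem_insert, Finset.mem_singleton] at hu hv
      rcases hu with rfl | rfl <;> rcases hv with rfl | rfl <;> simp

/-- Deleting the vertex at depth `j + 1` of tail `i` leaves the hairball with that tail cut down to
`j` vertices, and the rest of the tail as a separate path. -/
theorem move_vertex (n : ℕ) (r len : ι → ℕ) (i : ι) (j : ℕ) (hj : j < len i) :
    takeawayMove (hair n r len) {Sum.inr (i, j)}
      = hair n r (Function.update len i j) ∪ piece i (j + 1) (len i) := by
  ext s
  simp only [mem_takeawayMove, Finset.mem_union, mem_hair, mem_piece, Finset.singleton_subset_iff,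
    Function.update_apply]
  constructor
  · rintro ⟨⟨m, hm, rfl⟩ | ⟨i', k, hk, rfl⟩ | ⟨m, hm, rfl⟩ | ⟨i', k, hk, rfl⟩, h⟩
    · exact Or.inl (Or.inl ⟨m, hm, rfl⟩)
    · by_cases hi : i' = i
      · subst hi
        simp only [Finset.mem_singleton, Sum.inr.injEq, Prod.mk.injEq, true_and] at h
        rcases Nat.lt_or_gt_of_ne h with h | h
        · exact Or.inr (Or.inl ⟨k, h, hk, rfl⟩)
        · exact Or.inl (Or.inr (Or.inl ⟨i', k, by simpa using h, rfl⟩))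
      · exact Or.inl (Or.inr (Or.inl ⟨i', k, by simpa [hi] using hk, rfl⟩))
    · exact Or.inl (Or.inr (Or.inr (Or.inl ⟨m, hm, rfl⟩)))
    · by_cases hi : i' = i
      · subst hi
        simp only [Finset.mem_insert, Finset.mem_singleton, Sum.inr.injEq, Prod.mk.injEq,
          true_and, inr_eq_node, not_or] at h
        rcases Nat.lt_or_gt_of_ne h.2 with h' | h'
        · obtain ⟨k, rfl⟩ : ∃ k', k = k' + 1 := ⟨k - 1, by omega⟩
          exact Or.inr (Or.inr ⟨k, by omega, by omega, rfl⟩)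
        · exact Or.inl (Or.inr (Or.inr (Or.inr ⟨i', k, by simpa using h', rfl⟩)))
      · exact Or.inl (Or.inr (Or.inr (Or.inr ⟨i', k, by simpa [hi] using hk, rfl⟩)))
  · rintro ((⟨m, hm, rfl⟩ | ⟨i', k, hk, rfl⟩ | ⟨m, hm, rfl⟩ | ⟨i', k, hk, rfl⟩) |
      ⟨k, h1, h2, rfl⟩ | ⟨k, h1, h2, rfl⟩)
    · exact ⟨Or.inl ⟨m, hm, rfl⟩, by simp⟩
    · refine ⟨Or.inr (Or.inl ⟨i', k, ?_, rfl⟩), ?_⟩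
      · split_ifs at hk with h <;> [(subst h; omega); exact hk]
      · simp only [Finset.mem_singleton, Sum.inr.injEq, Prod.mk.injEq]
        rintro ⟨rfl, rfl⟩; simp at hk
    · exact ⟨Or.inr (Or.inr (Or.inl ⟨m, hm, rfl⟩)), by simp⟩
    · refine ⟨Or.inr (Or.inr (Or.inr ⟨i', k, ?_, rfl⟩)), ?_⟩
      · split_ifs at hk with h <;> [(subst h; omega); exact hk]
      · simp only [Finset.mem_insert, Finset.mem_singleton, Sum.inr.injEq, Prod.mk.injEq,
          inr_eq_node]
        rintro (⟨rfl, rfl⟩ | ⟨rfl, rfl⟩)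
        · simp at hk
        · simp at hk
    · exact ⟨Or.inr (Or.inl ⟨i, k, h2, rfl⟩), by simp; omega⟩
    · exact ⟨Or.inr (Or.inr (Or.inr ⟨i, k + 1, h2, rfl⟩)), by simp; omega⟩

/-- Deleting the edge above the vertex at depth `j + 1` of tail `i` leaves the hairball with that
tail cut down to `j` vertices, and the rest of the tail as a separate path. -/
theorem move_edge (n : ℕ) (r len : ι → ℕ) (i : ι) (j : ℕ) (hj : j < len i) :
    takeawayMove (hair n r len) {node r i j, Sum.inr (i, j)}
      = hair n r (Function.update len i j) ∪ piece i j (len i) := by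
  ext s
  simp only [mem_takeawayMove, Finset.mem_union, mem_hair, mem_piece, Finset.insert_subset_iff,
    Finset.singleton_subset_iff, Function.update_apply]
  constructor
  · rintro ⟨⟨m, hm, rfl⟩ | ⟨i', k, hk, rfl⟩ | ⟨m, hm, rfl⟩ | ⟨i', k, hk, rfl⟩, h⟩
    · exact Or.inl (Or.inl ⟨m, hm, rfl⟩)
    · by_cases hi : i' = i
      · subst hi
        rcases Nat.lt_or_ge k j with h | h
        · exact Or.inl (Or.inr (Or.inl ⟨i', k, by simpa using h, rfl⟩))
        · exact Or.inr (Or.inl ⟨k, h, hk, rfl⟩)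
      · exact Or.inl (Or.inr (Or.inl ⟨i', k, by simpa [hi] using hk, rfl⟩))
    · exact Or.inl (Or.inr (Or.inr (Or.inl ⟨m, hm, rfl⟩)))
    · by_cases hi : i' = i
      · subst hi
        have hne : j ≠ k := by
          rintro rfl
          simp at h
        rcases Nat.lt_or_gt_of_ne hne with h' | h'
        · obtain ⟨k, rfl⟩ : ∃ k', k = k' + 1 := ⟨k - 1, by omega⟩
          exact Or.inr (Or.inr ⟨k, by omega, by omega, rfl⟩)
        · exact Or.inl (Or.inr (Or.inr (Or.inr ⟨i', k, by simpa using h', rfl⟩)))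
      · exact Or.inl (Or.inr (Or.inr (Or.inr ⟨i', k, by simpa [hi] using hk, rfl⟩)))
  · rintro ((⟨m, hm, rfl⟩ | ⟨i', k, hk, rfl⟩ | ⟨m, hm, rfl⟩ | ⟨i', k, hk, rfl⟩) |
      ⟨k, h1, h2, rfl⟩ | ⟨k, h1, h2, rfl⟩)
    · exact ⟨Or.inl ⟨m, hm, rfl⟩, by simp⟩
    · refine ⟨Or.inr (Or.inl ⟨i', k, ?_, rfl⟩), ?_⟩
      · split_ifs at hk with h <;> [(subst h; omega); exact hk]
      · simp only [Finset.mem_singleton, Sum.inr.injEq, Prod.mk.injEq, node_eq_inr]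
        rintro ⟨⟨-, rfl⟩, -, h⟩; omega
    · exact ⟨Or.inr (Or.inr (Or.inl ⟨m, hm, rfl⟩)), by simp⟩
    · refine ⟨Or.inr (Or.inr (Or.inr ⟨i', k, ?_, rfl⟩)), ?_⟩
      · split_ifs at hk with h <;> [(subst h; omega); exact hk]
      · simp only [Finset.mem_insert, Finset.mem_singleton, Sum.inr.injEq, Prod.mk.injEq,
          inr_eq_node]
        rintro ⟨-, ⟨rfl, rfl⟩ | ⟨rfl, rfl⟩⟩
        · simp at hk
        · simp at hk
    · refine ⟨Or.inr (Or.inl ⟨i, k, h2, rfl⟩), ?_⟩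
      simp only [Finset.mem_singleton, Sum.inr.injEq, Prod.mk.injEq, node_eq_inr]
      omega
    · refine ⟨Or.inr (Or.inr (Or.inr ⟨i, k + 1, h2, rfl⟩)), ?_⟩
      simp only [Finset.mem_insert, Finset.mem_singleton, Sum.inr.injEq, Prod.mk.injEq, node_eq_inr]
      omega

theorem hair_piece_incomparable (n : ℕ) (r len : ι → ℕ) (i : ι) (j j' l : ℕ) (hj : j ≤ j') :
    ∀ s ∈ hair n r (Function.update len i j), ∀ t ∈ piece i j' l, ¬ s ⊆ t ∧ ¬ t ⊆ s := by
  -- the two complexes have no common vertex, and their faces are nonempty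
  intro s hs t ht
  have ht' : ∃ k, j' ≤ k ∧ Sum.inr (i, k) ∈ t := by
    rcases mem_piece.1 ht with ⟨k, h1, h2, rfl⟩ | ⟨k, h1, h2, rfl⟩ <;> exact ⟨k, h1, by simp⟩
  have ht'' : ∀ v ∈ t, ∃ k, j' ≤ k ∧ v = Sum.inr (i, k) := by
    intro v hv
    rcases mem_piece.1 ht with ⟨k, h1, h2, rfl⟩ | ⟨k, h1, h2, rfl⟩
    · exact ⟨k, h1, by simpa using hv⟩
    · rcases Finset.mem_insert.1 hv with rfl | hv
      · exact ⟨k, h1, rfl⟩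
      · exact ⟨k + 1, by omega, by simpa using hv⟩
  have hs' : s.Nonempty := by
    rcases mem_hair.1 hs with ⟨m, hm, rfl⟩ | ⟨i, k, hk, rfl⟩ | ⟨m, hm, rfl⟩ | ⟨i, k, hk, rfl⟩ <;> simp
  have hs'' : ∀ k, j' ≤ k → Sum.inr (i, k) ∉ s := by
    intro k hk hv
    rcases mem_hair.1 hs with ⟨m, hm, rfl⟩ | ⟨i', k', hk', rfl⟩ | ⟨m, hm, rfl⟩ | ⟨i', k', hk', rfl⟩
    · simp at hv
    · simp only [Finset.mem_singleton, Sum.inr.injEq, Prod.mk.injEq] at hv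
      obtain ⟨rfl, rfl⟩ := hv
      simp at hk'; omega
    · simp at hv
    · simp only [Finset.mem_insert, Finset.mem_singleton, Sum.inr.injEq, Prod.mk.injEq,
        inr_eq_node] at hv
      rcases hv with ⟨rfl, rfl⟩ | ⟨rfl, rfl⟩ <;> simp at hk' <;> omega
  constructor
  · intro hst
    obtain ⟨v, hv⟩ := hs'
    obtain ⟨k, hk, rfl⟩ := ht'' v (hst hv)
    exact hs'' k hk hv
  · intro hts
    obtain ⟨k, hk, hv⟩ := ht'
    exact hs'' k hk (hts hv)

theorem grundy_move_vertex (n : ℕ) (r len : ι → ℕ) (i : ι) (j : ℕ) (hj : j < len i) :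
    grundy (takeawayMove (hair n r len) {Sum.inr (i, j)})
      = grundy (hair n r (Function.update len i j)) ^^^ pv (len i - (j + 1)) := by
  rw [move_vertex n r len i j hj, grundy_union, grundy_piece]
  exact hair_piece_incomparable n r len i j (j + 1) _ (by omega)

theorem grundy_move_edge (n : ℕ) (r len : ι → ℕ) (i : ι) (j : ℕ) (hj : j < len i) :
    grundy (takeawayMove (hair n r len) {node r i j, Sum.inr (i, j)})
      = grundy (hair n r (Function.update len i j)) ^^^ pv (len i - j) := by
  rw [move_edge n r len i j hj, grundy_union, grundy_piece]
  exact hair_piece_incomparable n r len i j j _ le_rfl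

/-- A hairball with odd cycle is bipartite once the cycle edge leaving `m` is absent. -/
theorem grundy_broken {n : ℕ} (hn : 3 ≤ n) (hodd : n % 2 = 1) {r : ι → ℕ} (hr : ∀ i, r i < n)
    (len : ι → ℕ) (m : ℕ) (hm : m < n) (σ : Finset (ℕ ⊕ (ι × ℕ)))
    (hσ : σ ⊆ {Sum.inl m, Sum.inl (nxt n m)}) :
    grundy (takeawayMove (hair n r len) σ) = (vs (takeawayMove (hair n r len) σ)).card % 2 +
      2 * ((es (takeawayMove (hair n r len) σ)).card % 2) := by
  -- colours alternate along the cycle except across the absent edge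
  let χ₀ : ℕ → Bool := fun a => if a ≤ m then a.bodd else (a + 1).bodd
  let χ : ℕ ⊕ (ι × ℕ) → Bool :=
    Sum.elim χ₀ (fun p => xor (χ₀ (r p.1)) (p.2 + 1).bodd)
  have hcyc : ∀ a < n, a ≠ m → χ₀ a ≠ χ₀ (nxt n a) := by
    intro a ha ham
    have hb : n.bodd = true := by
      rw [Nat.mod_two_of_bodd] at hodd
      cases h : n.bodd <;> simp_all
    simp only [χ₀, nxt]
    by_cases h1 : a + 1 = n
    · rw [if_pos h1, if_neg (show ¬ a ≤ m by omega), h1, if_pos (by omega), hb]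
      simp
    · rw [if_neg h1]
      split_ifs <;> first | omega | simp
  have htail : ∀ i k, χ (node r i k) ≠ χ (Sum.inr (i, k)) := by
    intro i k
    cases k <;> simp [χ, node]
  apply grundy_bipartite _ ((isGr_hair hn hr len).takeawayMove σ) χ
  intro s hs u hu v hv huv
  obtain ⟨hs, hn⟩ := mem_takeawayMove.1 hs
  rcases mem_hair.1 hs with ⟨a, ha, rfl⟩ | ⟨i, k, hk, rfl⟩ | ⟨a, ha, rfl⟩ | ⟨i, k, hk, rfl⟩
  · simp only [Finset.mem_singleton] at hu hv; rw [hu, hv]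
  · simp only [Finset.mem_singleton] at hu hv; rw [hu, hv]
  · have := hcyc a ha (by rintro rfl; exact hn hσ)
    simp only [Finset.mem_insert, Finset.mem_singleton] at hu hv
    rcases hu with rfl | rfl <;> rcases hv with rfl | rfl
    · rfl
    · exact absurd huv this
    · exact absurd huv this.symm
    · rfl
  · have := htail i k
    simp only [Finset.mem_insert, Finset.mem_singleton] at hu hv
    rcases hu with rfl | rfl <;> rcases hv with rfl | rfl
    · rfl
    · exact absurd huv this
    · exact absurd huv this.symm
    · rfl

/-- Deleting a cycle edge leaves a bipartite graph with `n + L` vertices and `n + L - 1` edges,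
where `L` is the total length of the tails. -/
theorem grundy_cycle_edge {n : ℕ} (hn : 3 ≤ n) (hodd : n % 2 = 1) {r : ι → ℕ} (hr : ∀ i, r i < n)
    (len : ι → ℕ) (m : ℕ) (hm : m < n) :
    grundy (takeawayMove (hair n r len) {Sum.inl m, Sum.inl (nxt n m)})
      = if (∑ i, len i) % 2 = 0 then 1 else 2 := by
  have hc : ({Sum.inl m, Sum.inl (nxt n m)} : Finset (ℕ ⊕ (ι × ℕ))).card = 2 :=
    Finset.card_pair (by simpa using nxt_ne hn)
  have hmem : ({Sum.inl m, Sum.inl (nxt n m)} : Finset (ℕ ⊕ (ι × ℕ))) ∈ hair n r len :=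
    mem_hair.2 (Or.inr (Or.inr (Or.inl ⟨m, hm, rfl⟩)))
  rw [grundy_broken hn hodd hr len m hm _ subset_rfl, vs_move_edge _ hc, card_vs_hair hn]
  have := card_es_move_edge _ hc hmem
  rw [card_es_hair hn] at this
  split_ifs <;> omega

/-- Deleting a cycle vertex leaves a bipartite graph; the parity of its number of edges depends on
the number of tails at that vertex. -/
theorem grundy_cycle_vertex {n : ℕ} (hn : 3 ≤ n) (hodd : n % 2 = 1) {r : ι → ℕ}
    (hr : ∀ i, r i < n) (len : ι → ℕ) (m : ℕ) (hm : m < n) :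
    grundy (takeawayMove (hair n r len) {Sum.inl m})
      = if (∑ i, len i) % 2 = 0 then
          if (Finset.univ.filter (fun i => r i = m ∧ 0 < len i)).card % 2 = 0 then 2 else 0
        else
          if (Finset.univ.filter (fun i => r i = m ∧ 0 < len i)).card % 2 = 0 then 1 else 3 := by
  have hmem : ({Sum.inl m} : Finset (ℕ ⊕ (ι × ℕ))) ∈ hair n r len :=
    mem_hair.2 (Or.inl ⟨m, hm, rfl⟩)
  rw [grundy_broken hn hodd hr len m hm _ (by simp)]
  have h1 := card_vs_move_vertex _ hmem
  have h2 := card_es_move_vertex (hair n r len) (Sum.inl m)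
  rw [card_vs_hair hn] at h1
  rw [card_es_hair hn, degr_hair hn r len hm] at h2
  split_ifs <;> omega

end Model

/-! ### The value of an odd hairball -/

section Value

/-- The class of a single `k`-tail at the cycle vertex `a`, in the `ZMod 2`-vector space spanned
by all kinds of nonempty tails. -/
noncomputable def tl (a k : ℕ) : ℕ × ℕ →₀ ZMod 2 := if k = 0 then 0 else Finsupp.single (a, k) 1

/-- The parity of the total length of a collection of tails. -/
noncomputable def lenPar : (ℕ × ℕ →₀ ZMod 2) →ₗ[ZMod 2] ZMod 2 :=
  Finsupp.linearCombination (ZMod 2) (fun p => (p.2 : ZMod 2))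

/-- The parity of the number of nonempty tails at the cycle vertex `a`. -/
noncomputable def cntPar (a : ℕ) : (ℕ × ℕ →₀ ZMod 2) →ₗ[ZMod 2] ZMod 2 :=
  Finsupp.linearCombination (ZMod 2) (fun p => if p.1 = a then (1 : ZMod 2) else 0)

/-- The collection consists of one `k`-tail and one `(k+1)`-tail at one cycle vertex. -/
def Special (T : ℕ × ℕ →₀ ZMod 2) : Prop := ∃ a k, T = tl a k + tl a (k + 1)

/-- The claimed nim-value of an odd hairball in terms of the class of its tails. -/
noncomputable def hairVal (T : ℕ × ℕ →₀ ZMod 2) : ℕ :=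
  if T = 0 then 0 else if Special T then 4 else if lenPar T = 0 then 3 else 0

theorem zmod2_cases : ∀ x : ZMod 2, x = 0 ∨ x = 1 := by decide

theorem tl_zero (a : ℕ) : tl a 0 = 0 := by simp [tl]

theorem tl_apply (a k b x : ℕ) : tl a k (b, x) = if a = b ∧ k = x ∧ k ≠ 0 then 1 else 0 := by
  unfold tl
  by_cases h : k = 0
  · simp [h]
  · rw [if_neg h, Finsupp.single_apply]
    simp [h]

theorem lenPar_tl (a k : ℕ) : lenPar (tl a k) = k := by
  by_cases h : k = 0 <;> simp [tl, lenPar, h]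

theorem cntPar_tl (a b k : ℕ) : cntPar b (tl a k) = if a = b ∧ k ≠ 0 then 1 else 0 := by
  by_cases h : k = 0 <;> simp [tl, cntPar, h]

theorem lenPar_special {T : ℕ × ℕ →₀ ZMod 2} (h : Special T) : lenPar T = 1 := by
  obtain ⟨a, k, rfl⟩ := h
  rw [map_add, lenPar_tl, lenPar_tl]
  push_cast
  rw [← add_assoc, CharTwo.add_self_eq_zero, zero_add]

theorem hairVal_cases (T : ℕ × ℕ →₀ ZMod 2) :
    (lenPar T = 0 ∧ (hairVal T = 0 ∧ T = 0 ∨ hairVal T = 3 ∧ T ≠ 0)) ∨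
    (lenPar T = 1 ∧ (hairVal T = 4 ∧ Special T ∨ hairVal T = 0 ∧ ¬ Special T)) := by
  rcases zmod2_cases (lenPar T) with h | h
  · have hs : ¬ Special T := fun hs => by rw [lenPar_special hs] at h; exact one_ne_zero h
    by_cases h0 : T = 0 <;> simp [hairVal, h, h0, hs]
  · have h0 : T ≠ 0 := by rintro rfl; simp at h
    by_cases hs : Special T <;> simp [hairVal, h, h0, hs]

theorem natCast_two (k : ℕ) : ((k : ZMod 2) = 0 ∧ k % 2 = 0) ∨ ((k : ZMod 2) = 1 ∧ k % 2 = 1) := by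
  rcases Nat.mod_two_eq_zero_or_one k with h | h
  · exact Or.inl ⟨(ZMod.natCast_eq_zero_iff k 2).2 (Nat.dvd_of_mod_eq_zero h), h⟩
  · exact Or.inr ⟨by rw [← ZMod.natCast_mod, h]; rfl, h⟩

theorem eq_of_add_add {T x y : ℕ × ℕ →₀ ZMod 2} (h : T + x + y = 0) : T = y + x := by
  rw [add_assoc] at h
  rw [add_comm y x]
  have := eq_neg_of_add_eq_zero_left h
  rwa [ZModModule.neg_eq_self] at this

/-- Shortening the shortest tail at `a` by one vertex never produces a special collection
if the number of tails at `a` is even. -/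
theorem not_special_shorten {T : ℕ × ℕ →₀ ZMod 2} {a k : ℕ} (hc : cntPar a T = 0) (hk : 0 < k)
    (hT : T (a, k) = 1) (hmin : ∀ x < k, T (a, x) = 0) :
    ¬ Special (T + tl a k + tl a (k - 1)) := by
  rintro ⟨b, m, h⟩
  have hx : ∀ x, T (a, x) + (if k = x ∧ k ≠ 0 then 1 else 0)
      + (if k - 1 = x ∧ k - 1 ≠ 0 then 1 else 0)
      = (if b = a ∧ m = x ∧ m ≠ 0 then 1 else 0) + (if b = a ∧ m + 1 = x then 1 else 0) := by
    intro x
    have := DFunLike.congr_fun h (a, x)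
    simpa [tl_apply] using this
  have hcc : 1 + (if k - 1 ≠ 0 then (1 : ZMod 2) else 0)
      = (if b = a ∧ m ≠ 0 then 1 else 0) + (if b = a then 1 else 0) := by
    have := congrArg (cntPar a) h
    simpa [cntPar_tl, hc, hk.ne'] using this
  have two : (1 : ZMod 2) + 1 = 0 := rfl
  by_cases hb : b = a
  · by_cases hk1 : k = 1
    · subst hk1
      by_cases hm : m = 0
      · have := hx 1
        simp [hb, hm, hT, two] at this
      · simp [hb, hm, two] at hcc
    · have hk1' : k - 1 ≠ 0 := by omega
      by_cases hm : m = 0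
      · simp [hb, hm, hk1', two] at hcc
      · have h1 := hx (k - 1)
        rw [hmin _ (by omega)] at h1
        have hkk : k ≠ k - 1 := by omega
        by_cases e1 : m = k - 1
        · have h2 := hx k
          rw [hT] at h2
          have : ¬ (k - 1 = k) := by omega
          have e3 : k - 1 + 1 = k := by omega
          simp [hb, e1, hk1', this, e3, two, hk.ne'] at h2
        · by_cases e2 : m + 1 = k - 1
          · have h2 := hx m
            rw [hmin m (by omega)] at h2
            simp [hb, hm, show k ≠ m by omega, show k - 1 ≠ m by omega] at h2
          · simp [hb, hk1', e1, e2, hkk] at h1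
  · have h1 := hx (k - 1)
    rw [hmin _ (by omega)] at h1
    by_cases hk1 : k - 1 = 0
    · simp [hb, hk1] at hcc
    · simp [hb, hk1, show k ≠ k - 1 by omega] at h1

variable {ι : Type*} [Fintype ι]

/-- The class of all tails: tails of equal length at the same vertex cancel in pairs. -/
noncomputable def tails (r len : ι → ℕ) : ℕ × ℕ →₀ ZMod 2 := ∑ i, tl (r i) (len i)

theorem lenPar_tails (r len : ι → ℕ) : lenPar (tails r len) = ((∑ i, len i : ℕ) : ZMod 2) := by
  simp [tails, lenPar_tl]

theorem cntPar_tails (r len : ι → ℕ) (a : ℕ) : cntPar a (tails r len)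
    = ((Finset.univ.filter (fun i => r i = a ∧ 0 < len i)).card : ZMod 2) := by
  simp [tails, cntPar_tl, Nat.pos_iff_ne_zero]

theorem exists_tail {r len : ι → ℕ} {a k : ℕ} (h : tails r len (a, k) ≠ 0) :
    ∃ i, r i = a ∧ len i = k ∧ 0 < k := by
  rw [tails, Finsupp.finsetSum_apply] at h
  obtain ⟨i, -, hi⟩ := Finset.exists_ne_zero_of_sum_ne_zero h
  rw [tl_apply] at hi
  have : r i = a ∧ len i = k ∧ len i ≠ 0 := by
    by_contra hc
    rw [if_neg hc] at hi
    exact hi rfl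
  exact ⟨i, this.1, this.2.1, by omega⟩

theorem tails_update (r len : ι → ℕ) (i : ι) (j : ℕ) :
    tails r (Function.update len i j) = tails r len + tl (r i) (len i) + tl (r i) j := by
  unfold tails
  rw [← Finset.add_sum_erase _ _ (Finset.mem_univ i),
    ← Finset.add_sum_erase _ (fun x => tl (r x) (len x)) (Finset.mem_univ i),
    Finset.sum_congr rfl (g := fun x => tl (r x) (len x))]
  · rw [Function.update_self, add_comm (tl (r i) (len i)), add_assoc (∑ x ∈ _, _),
      ZModModule.add_self, add_zero, add_comm]
  · intro x hx
    rw [Function.update_of_ne (Finset.ne_of_mem_erase hx)]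

/-- If every vertex of the odd cycle carried an odd number of tails, all of them single vertices,
then the total length of the tails would be odd. -/
theorem exists_long_tail {n : ℕ} (hodd : n % 2 = 1) {r len : ι → ℕ} (hr : ∀ i, r i < n)
    (hL : lenPar (tails r len) = 0) (hc : ∀ m < n, cntPar m (tails r len) = 1) :
    ∃ i, 2 ≤ len i := by
  by_contra! hlen
  have h1 : ∑ m ∈ Finset.range n, cntPar m (tails r len) = 1 := by
    rw [Finset.sum_congr rfl (g := fun _ => 1) (fun m hm => hc m (Finset.mem_range.1 hm))]
    have := natCast_two n
    simp only [Finset.sum_const, Finset.card_range, nsmul_eq_mul, mul_one]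
    rcases this with h | h
    · omega
    · exact h.1
  have h2 : ∑ m ∈ Finset.range n, cntPar m (tails r len) = lenPar (tails r len) := by
    simp only [tails, map_sum, cntPar_tl, lenPar_tl]
    rw [Finset.sum_comm]
    refine Finset.sum_congr rfl fun i _ => ?_
    have hi := hlen i
    by_cases h0 : len i = 0
    · simp [h0]
    · have : len i = 1 := by omega
      simp [this, hr i]
  rw [h2, hL] at h1
  exact zero_ne_one h1

theorem pv_cases (m : ℕ) : (m = 0 ∧ pv m = 0) ∨ (m % 2 = 1 ∧ pv m = 1) ∨
    (m ≠ 0 ∧ m % 2 = 0 ∧ pv m = 2) := by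
  unfold pv
  split_ifs <;> omega

theorem lenPar_shorten (T : ℕ × ℕ →₀ ZMod 2) (a k j : ℕ) (hj : j ≤ k) :
    lenPar (T + tl a k + tl a j) = lenPar T + ((k - j : ℕ) : ZMod 2) := by
  rw [map_add, map_add, lenPar_tl, lenPar_tl, add_assoc, Nat.cast_sub hj, CharTwo.sub_eq_add]

/-- Shortening a tail by deleting a tail edge never reproduces the value of the position. -/
theorem edge_move_ne (T : ℕ × ℕ →₀ ZMod 2) (a k j : ℕ) (hj : j < k) :
    hairVal (T + tl a k + tl a j) ^^^ pv (k - j) ≠ hairVal T := by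
  have hL := lenPar_shorten T a k j hj.le
  have h1 := hairVal_cases T
  have h2 := hairVal_cases (T + tl a k + tl a j)
  have h3 := natCast_two (k - j)
  have h4 := pv_cases (k - j)
  have two : (1 : ZMod 2) + 1 = 0 := rfl
  have hz : k - j ≠ 0 := by omega
  rcases h3 with ⟨h3, h3'⟩ | ⟨h3, h3'⟩ <;> rw [h3] at hL <;>
    rcases h1 with ⟨h1, ⟨h1', h1''⟩ | ⟨h1', h1''⟩⟩ | ⟨h1, ⟨h1', h1''⟩ | ⟨h1', h1''⟩⟩ <;>
    rcases h2 with ⟨h2, ⟨h2', h2''⟩ | ⟨h2', h2''⟩⟩ | ⟨h2, ⟨h2', h2''⟩ | ⟨h2', h2''⟩⟩ <;>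
    rw [h1, h2] at hL <;>
    simp [hz, h3'] at h4 <;> rw [h1', h2', h4] <;> simp [two] at hL ⊢

/-- Deleting a tail vertex never reproduces the value of the position. -/
theorem vertex_move_ne (T : ℕ × ℕ →₀ ZMod 2) (a k j : ℕ) (hj : j < k) :
    hairVal (T + tl a k + tl a j) ^^^ pv (k - (j + 1)) ≠ hairVal T := by
  have hL := lenPar_shorten T a k j hj.le
  have h1 := hairVal_cases T
  have h2 := hairVal_cases (T + tl a k + tl a j)
  have h3 := natCast_two (k - j)
  have two : (1 : ZMod 2) + 1 = 0 := rfl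
  by_cases hz : k = j + 1
  · -- a leaf is deleted
    subst hz
    have s1 : T + tl a (j + 1) + tl a j = 0 → Special T := fun h => ⟨a, j, eq_of_add_add h⟩
    have s2 : T = 0 → Special (T + tl a (j + 1) + tl a j) := by
      rintro rfl
      exact ⟨a, j, by rw [zero_add, add_comm]⟩
    have hp : pv (j + 1 - (j + 1)) = 0 := by simp [pv]
    rw [hp, Nat.xor_zero]
    have e : j + 1 - j = 1 := by omega
    rw [e, Nat.cast_one] at hL
    rcases h1 with ⟨h1, ⟨h1', h1''⟩ | ⟨h1', h1''⟩⟩ | ⟨h1, ⟨h1', h1''⟩ | ⟨h1', h1''⟩⟩ <;>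
      rcases h2 with ⟨h2, ⟨h2', h2''⟩ | ⟨h2', h2''⟩⟩ | ⟨h2, ⟨h2', h2''⟩ | ⟨h2', h2''⟩⟩ <;>
      rw [h1, h2] at hL <;> rw [h1', h2'] <;> 
      first
      | omega
      | exact absurd hL (by decide)
      | exact absurd (s2 h1'') h2''
      | exact absurd (s1 h2'') h1''
  · have h4 := pv_cases (k - (j + 1))
    have hz' : k - (j + 1) ≠ 0 := by omega
    rcases h3 with ⟨h3, h3'⟩ | ⟨h3, h3'⟩ <;> rw [h3] at hL
    · have h5 : (k - (j + 1)) % 2 = 1 := by omega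
      rcases h1 with ⟨h1, ⟨h1', h1''⟩ | ⟨h1', h1''⟩⟩ | ⟨h1, ⟨h1', h1''⟩ | ⟨h1', h1''⟩⟩ <;>
      rcases h2 with ⟨h2, ⟨h2', h2''⟩ | ⟨h2', h2''⟩⟩ | ⟨h2, ⟨h2', h2''⟩ | ⟨h2', h2''⟩⟩ <;>
      rw [h1, h2] at hL <;>
      simp [hz', h5] at h4 <;> rw [h1', h2', h4] <;> simp at hL ⊢
    · have h5 : (k - (j + 1)) % 2 = 0 := by omega
      rcases h1 with ⟨h1, ⟨h1', h1''⟩ | ⟨h1', h1''⟩⟩ | ⟨h1, ⟨h1', h1''⟩ | ⟨h1', h1''⟩⟩ <;>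
      rcases h2 with ⟨h2, ⟨h2', h2''⟩ | ⟨h2', h2''⟩⟩ | ⟨h2, ⟨h2', h2''⟩ | ⟨h2', h2''⟩⟩ <;>
      rw [h1, h2] at hL <;>
      simp [hz', h5] at h4 <;> rw [h1', h2', h4] <;> simp [two] at hL ⊢

theorem hairVal_of_ne {T : ℕ × ℕ →₀ ZMod 2} (hL : lenPar T = 0) (h : T ≠ 0) : hairVal T = 3 := by
  rcases hairVal_cases T with ⟨_, h' | h'⟩ | ⟨h1, _⟩
  · exact absurd h'.2 h
  · exact h'.1
  · rw [hL] at h1; exact absurd h1 zero_ne_one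

/-- The nim-value of every hairball with odd cycle, by induction on the total length of the
tails. No move keeps the value `hairVal`, and every smaller value is reached by some move; the
cases are those of the definition of `hairVal`. -/
theorem grundy_hair {n : ℕ} (hn : 3 ≤ n) (hodd : n % 2 = 1) {r : ι → ℕ} (hr : ∀ i, r i < n)
    (len : ι → ℕ) : grundy (hair n r len) = hairVal (tails r len) := by
  have hlt : ∀ i j, j < len i → ∑ x, Function.update len i j x < ∑ x, len x := by
    intro i j hj
    refine Finset.sum_lt_sum (fun x _ => ?_) ⟨i, Finset.mem_univ i, by simpa using hj⟩
    rw [Function.update_apply]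
    split_ifs with h
    · rw [h]; exact hj.le
    · exact le_rfl
  set T := tails r len with hT
  have ihv : ∀ i j, j < len i → grundy (takeawayMove (hair n r len) {Sum.inr (i, j)})
      = hairVal (T + tl (r i) (len i) + tl (r i) j) ^^^ pv (len i - (j + 1)) := by
    intro i j hj
    have := hlt i j hj
    rw [grundy_move_vertex n r len i j hj, grundy_hair hn hodd hr, tails_update]
  have ihe : ∀ i j, j < len i → grundy (takeawayMove (hair n r len) {node r i j, Sum.inr (i, j)})
      = hairVal (T + tl (r i) (len i) + tl (r i) j) ^^^ pv (len i - j) := by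
    intro i j hj
    have := hlt i j hj
    rw [grundy_move_edge n r len i j hj, grundy_hair hn hodd hr, tails_update]
  have hL : (∑ i, len i) % 2 = 0 ↔ lenPar T = 0 := by
    rw [hT, lenPar_tails]
    rcases natCast_two (∑ i, len i) with h | h <;> simp [h]
  have hC : ∀ m, (Finset.univ.filter (fun i => r i = m ∧ 0 < len i)).card % 2 = 0 ↔
      cntPar m T = 0 := by
    intro m
    rw [hT, cntPar_tails]
    rcases natCast_two (Finset.univ.filter (fun i => r i = m ∧ 0 < len i)).card with h | h <;>
      simp [h]
  have ce : ∀ m < n, grundy (takeawayMove (hair n r len) {Sum.inl m, Sum.inl (nxt n m)})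
      = if lenPar T = 0 then 1 else 2 := by
    intro m hm
    rw [grundy_cycle_edge hn hodd hr len m hm]
    simp only [hL]
  have cv : ∀ m < n, grundy (takeawayMove (hair n r len) {Sum.inl m})
      = if lenPar T = 0 then if cntPar m T = 0 then 2 else 0
        else if cntPar m T = 0 then 1 else 3 := by
    intro m hm
    rw [grundy_cycle_vertex hn hodd hr len m hm]
    simp only [hL, hC]
  have mv : ∀ m < n, ({Sum.inl m} : Finset (ℕ ⊕ (ι × ℕ))) ∈ hair n r len :=
    fun m hm => mem_hair.2 (Or.inl ⟨m, hm, rfl⟩)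
  have me : ∀ m < n, ({Sum.inl m, Sum.inl (nxt n m)} : Finset (ℕ ⊕ (ι × ℕ))) ∈ hair n r len :=
    fun m hm => mem_hair.2 (Or.inr (Or.inr (Or.inl ⟨m, hm, rfl⟩)))
  have mt : ∀ i, ∀ j < len i, ({Sum.inr (i, j)} : Finset (ℕ ⊕ (ι × ℕ))) ∈ hair n r len :=
    fun i j hj => mem_hair.2 (Or.inr (Or.inl ⟨i, j, hj, rfl⟩))
  apply grundy_eq_of
  · intro σ hσ
    rcases mem_hair.1 hσ with ⟨m, hm, rfl⟩ | ⟨i, k, hk, rfl⟩ | ⟨m, hm, rfl⟩ | ⟨i, k, hk, rfl⟩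
    · rw [cv m hm]
      rcases hairVal_cases T with ⟨h1, ⟨h2, h3⟩ | ⟨h2, h3⟩⟩ | ⟨h1, ⟨h2, h3⟩ | ⟨h2, h3⟩⟩
      · rw [h2, h3]; simp
      · rw [h2, h1]; split_ifs <;> simp_all
      · rw [h2, h1]; split_ifs <;> simp_all
      · rw [h2, h1]; split_ifs <;> simp_all
    · rw [ihv i k hk]
      exact vertex_move_ne T _ _ _ hk
    · rw [ce m hm]
      rcases hairVal_cases T with ⟨h1, ⟨h2, h3⟩ | ⟨h2, h3⟩⟩ | ⟨h1, ⟨h2, h3⟩ | ⟨h2, h3⟩⟩ <;>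
        rw [h2, h1] <;> simp
    · rw [ihe i k hk]
      exact edge_move_ne T _ _ _ hk
  · intro v hv
    rcases hairVal_cases T with ⟨h1, ⟨h2, h3⟩ | ⟨h2, h3⟩⟩ | ⟨h1, ⟨h2, h3⟩ | ⟨h2, h3⟩⟩ <;>
      rw [h2] at hv
    · omega
    · obtain rfl | rfl | rfl : v = 0 ∨ v = 1 ∨ v = 2 := by omega
      -- value `0`: delete a cycle vertex with an odd number of tails, if there is one
      · by_cases hex : ∃ m < n, cntPar m T ≠ 0
        · obtain ⟨m, hm, hc⟩ := hex
          exact ⟨_, mv m hm, by rw [cv m hm, if_pos h1, if_neg hc]⟩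
        · push Not at hex
          obtain ⟨⟨a, k₀⟩, hk₀⟩ := Finsupp.ne_iff.1 h3
          -- the shortest tail at `a` loses its leaf
          have hfind : ∃ k, T (a, k) ≠ 0 := ⟨k₀, hk₀⟩
          obtain ⟨i, hi1, hi2, hi3⟩ := exists_tail (Nat.find_spec hfind)
          have hmin : ∀ x < Nat.find hfind, T (a, x) = 0 := fun x hx => by
            simpa using Nat.find_min hfind hx
          have hone : T (a, Nat.find hfind) = 1 :=
            (zmod2_cases _).resolve_left (Nat.find_spec hfind)
          generalize Nat.find hfind = k at *
          refine ⟨_, mt i (k - 1) (by omega), ?_⟩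
          rw [ihv i (k - 1) (by omega), hi1, hi2]
          have hns := not_special_shorten (hex a (hi1 ▸ hr i)) hi3 hone hmin
          have hl := lenPar_shorten T a k (k - 1) (by omega)
          rw [h1, show k - (k - 1) = 1 by omega] at hl
          rw [show k - (k - 1 + 1) = 0 by omega]
          rcases hairVal_cases (T + tl a k + tl a (k - 1)) with ⟨g1, _⟩ | ⟨g1, ⟨g2, g3⟩ | ⟨g2, g3⟩⟩
          · rw [hl] at g1; exact absurd g1 (by decide)
          · exact absurd g3 hns
          · rw [g2]; simp [pv]
      -- value `1`: delete a cycle edge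
      · exact ⟨_, me 0 (by omega), by rw [ce 0 (by omega), if_pos h1]⟩
      -- value `2`: delete a cycle vertex with an even number of tails, if there is one; otherwise
      -- cut a tail so that a single vertex splits off, giving `3 ^^^ 1`
      · by_cases hex : ∃ m < n, cntPar m T = 0
        · obtain ⟨m, hm, hc⟩ := hex
          exact ⟨_, mv m hm, by rw [cv m hm, if_pos h1, if_pos hc]⟩
        · push Not at hex
          have hex' : ∀ m < n, cntPar m T = 1 := fun m hm =>
            (zmod2_cases _).resolve_left (hex m hm)
          obtain ⟨i, hi⟩ := exists_long_tail hodd hr h1 hex'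
          refine ⟨_, mt i (len i - 2) (by omega), ?_⟩
          rw [ihv i _ (by omega), show len i - (len i - 2 + 1) = 1 by omega]
          have hl := lenPar_shorten T (r i) (len i) (len i - 2) (by omega)
          rw [h1, show len i - (len i - 2) = 2 by omega] at hl
          rw [hairVal_of_ne (hl.trans (by decide))]
          · rfl
          · intro h0
            -- another cycle vertex still carries an odd number of tails
            obtain ⟨b, hb, hbi⟩ : ∃ b < n, b ≠ r i := by
              by_cases h : r i = 0
              · exact ⟨1, by omega, by omega⟩
              · exact ⟨0, by omega, by omega⟩
            have := congrArg (cntPar b) h0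
            simp [cntPar_tl, hbi.symm, hex' b hb] at this
    · obtain ⟨a, k, hak⟩ := h3
      have hone : T (a, k + 1) ≠ 0 := by
        rw [hak]; simp [tl_apply]
      obtain ⟨i, hi1, hi2, hi3⟩ := exists_tail hone
      have han : a < n := hi1 ▸ hr i
      have h1' : lenPar T ≠ 0 := by rw [h1]; exact one_ne_zero
      obtain rfl | rfl | rfl | rfl : v = 0 ∨ v = 1 ∨ v = 2 ∨ v = 3 := by omega
      -- value `0`: the leaf of the `(k + 1)`-tail is deleted and the two tails cancel
      · refine ⟨_, mt i k (by omega), ?_⟩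
        have : T + tl a (k + 1) + tl a k = 0 := by
          rw [hak, add_assoc, add_comm (tl a (k + 1)) (tl a k), ZModModule.add_self]
        rw [ihv i k (by omega), hi1, hi2, this]
        simp [pv, hairVal]
      -- value `1`: delete a cycle vertex other than `a`
      · obtain ⟨b, hb, hba⟩ : ∃ b < n, b ≠ a := by
          by_cases h : a = 0
          · exact ⟨1, by omega, by omega⟩
          · exact ⟨0, by omega, by omega⟩
        refine ⟨_, mv b hb, ?_⟩
        rw [cv b hb, if_neg h1', if_pos]
        rw [hak]; simp [cntPar_tl, hba.symm]
      -- value `2`: delete a cycle edge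
      · exact ⟨_, me 0 (by omega), by rw [ce 0 (by omega), if_neg h1']⟩
      -- value `3`: delete `a` if it carries a single tail, and the leaf of the `k`-tail otherwise
      · by_cases hk : k = 0
        · refine ⟨_, mv a han, ?_⟩
          rw [cv a han, if_neg h1', if_neg]
          rw [hak]; simp [cntPar_tl, hk]
        · have hone' : T (a, k) ≠ 0 := by
            rw [hak]; simp [tl_apply, hk]
          obtain ⟨i', hi1', hi2', hi3'⟩ := exists_tail hone'
          refine ⟨_, mt i' (k - 1) (by omega), ?_⟩
          rw [ihv i' _ (by omega), hi1', hi2', show k - (k - 1 + 1) = 0 by omega]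
          have hl := lenPar_shorten T a k (k - 1) (by omega)
          rw [h1, show k - (k - 1) = 1 by omega] at hl
          rw [hairVal_of_ne (hl.trans (by decide))]
          · simp [pv]
          · intro h0
            have := DFunLike.congr_fun h0 (a, k + 1)
            rw [hak] at this
            simp [tl_apply, show k - 1 ≠ k + 1 by omega] at this
    · omega
termination_by ∑ i, len i

end Value

/-! ### Hairballs as cycles with tails -/

section Transfer
variable {V : Type*} {G : SimpleGraph V} {n : ℕ} {cyc : ℕ → V} {d : V → ℕ} {p : V → V}

/-- A combinatorial description of a hairball: `cyc 0, …, cyc (n - 1)` are the vertices of the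
cycle in cyclic order, `d v` is the distance of `v` to the cycle, and `p v` is the neighbour of
`v` on the way to the cycle if `v` lies off the cycle (and a junk value otherwise). -/
structure IsHair (G : SimpleGraph V) (n : ℕ) (cyc : ℕ → V) (d : V → ℕ) (p : V → V) : Prop where
  three_le : 3 ≤ n
  cyc_inj : ∀ a < n, ∀ b < n, cyc a = cyc b → a = b
  d_eq_zero : ∀ v, d v = 0 ↔ ∃ m < n, cyc m = v
  d_p : ∀ v, d v ≠ 0 → d (p v) + 1 = d v
  adj_iff : ∀ u v, G.Adj u v ↔
    (∃ m < n, (u = cyc m ∧ v = cyc (nxt n m)) ∨ (v = cyc m ∧ u = cyc (nxt n m))) ∨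
    (d u ≠ 0 ∧ p u = v) ∨ (d v ≠ 0 ∧ p v = u)
  p_inj : ∀ u v, d u ≠ 0 → d v ≠ 0 → d (p u) ≠ 0 → p u = p v → u = v

/-- In a connected graph every vertex has a distance to a nonempty set `C`, realized by a
neighbour that is one step closer. -/
theorem exists_depth (hconn : G.Connected) (C : V → Prop) (hC : ∃ x, C x) :
    ∃ (d : V → ℕ) (p : V → V), (∀ v, d v = 0 ↔ C v) ∧
      ∀ v, d v ≠ 0 → G.Adj v (p v) ∧ d (p v) + 1 = d v := by
  obtain ⟨x, hx⟩ := hC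
  have hex : ∀ v, ∃ k, ∃ u, C u ∧ ∃ w : G.Walk v u, w.length = k := fun v =>
    ⟨_, x, hx, (hconn.preconnected v x).some, rfl⟩
  have h0 : ∀ v, Nat.find (hex v) = 0 ↔ C v := by
    intro v
    rw [Nat.find_eq_zero]
    constructor
    · rintro ⟨u, hu, w, hw⟩
      rwa [SimpleGraph.Walk.eq_of_length_eq_zero hw]
    · exact fun h => ⟨v, h, SimpleGraph.Walk.nil, rfl⟩
  have hp : ∀ v, ∃ y, Nat.find (hex v) ≠ 0 →
      G.Adj v y ∧ Nat.find (hex y) + 1 = Nat.find (hex v) := by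
    intro v
    by_cases hv : Nat.find (hex v) = 0
    · exact ⟨v, fun h => absurd hv h⟩
    obtain ⟨u, hu, w, hw⟩ := Nat.find_spec (hex v)
    cases w with
    | nil => exact absurd ((h0 v).2 hu) hv
    | @cons _ y _ hadj w =>
      refine ⟨y, fun _ => ⟨hadj, ?_⟩⟩
      rw [SimpleGraph.Walk.length_cons] at hw
      have h1 : Nat.find (hex y) ≤ w.length := Nat.find_min' (hex y) ⟨u, hu, w, rfl⟩
      obtain ⟨u', hu', w', hw'⟩ := Nat.find_spec (hex y)
      have h2 : Nat.find (hex v) ≤ w'.length + 1 :=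
        Nat.find_min' (hex v) ⟨u', hu', SimpleGraph.Walk.cons hadj w', by simp⟩
      omega
  choose p hp using hp
  exact ⟨fun v => Nat.find (hex v), p, h0, hp⟩

/-- Counting edges: the cycle edges and the edges from the vertices off the cycle towards the
cycle are `|V|` distinct edges, hence all edges. -/
theorem exists_isHair [Fintype V] [DecidableEq V] [DecidableRel G.Adj]
    (hconn : G.Connected) (hpseudo : G.edgeFinset.card = Fintype.card V)
    {x : V} (c : G.Walk x x) (hc : c.IsCycle)
    (hhairball : ∀ v : V, v ∉ c.support → G.degree v ≤ 2) :
    ∃ (cyc : ℕ → V) (d : V → ℕ) (p : V → V), IsHair G c.length cyc d p ∧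
      ∀ v, d v = 0 ↔ v ∈ c.support := by
  obtain ⟨d, p, hd, hp⟩ := exists_depth hconn (· ∈ c.support) ⟨x, c.start_mem_support⟩
  have hn := hc.three_le_length
  set n := c.length with hnn
  have hinj : ∀ a < n, ∀ b < n, c.getVert a = c.getVert b → a = b := by
    intro a ha b hb h
    exact hc.getVert_injOn' (by simp only [Set.mem_ofPred_eq]; omega)
      (by simp only [Set.mem_ofPred_eq]; omega) h
  have hnxt : ∀ m < n, c.getVert (nxt n m) = c.getVert (m + 1) := by
    intro m hm
    rcases nxt_cases n m with ⟨h1, h2⟩ | ⟨h1, h2⟩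
    · rw [h1, h2, SimpleGraph.Walk.getVert_zero, hnn, SimpleGraph.Walk.getVert_length]
    · rw [h1]
  have hadj : ∀ m < n, G.Adj (c.getVert m) (c.getVert (nxt n m)) := by
    intro m hm
    rw [hnxt m hm]
    exact c.adj_getVert_succ hm
  have hd0 : ∀ v, d v = 0 ↔ ∃ m < n, c.getVert m = v := by
    intro v
    rw [hd, SimpleGraph.Walk.mem_support_iff_exists_getVert]
    constructor
    · rintro ⟨m, h1, h2⟩
      by_cases hm : m < n
      · exact ⟨m, hm, h1⟩
      · have : m = n := by omega
        refine ⟨0, by omega, ?_⟩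
        rw [← h1, this, hnn, SimpleGraph.Walk.getVert_length, SimpleGraph.Walk.getVert_zero]
    · rintro ⟨m, h1, h2⟩
      exact ⟨m, h2, h1.le⟩
  set EC : Finset (Sym2 V) :=
    (Finset.range n).image (fun m => s(c.getVert m, c.getVert (nxt n m))) with hEC
  set EP : Finset (Sym2 V) :=
    (Finset.univ.filter (fun v => d v ≠ 0)).image (fun v => s(v, p v)) with hEP
  have cEC : EC.card = n := by
    rw [hEC, Finset.card_image_of_injOn, Finset.card_range]
    intro a ha b hb h
    rw [Finset.mem_coe, Finset.mem_range] at ha hb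
    rcases Sym2.eq_iff.1 h with ⟨h1, -⟩ | ⟨h1, h2⟩
    · exact hinj a ha b hb h1
    · have h1 := hinj _ ha _ (nxt_lt hb) h1
      have h2 := hinj _ (nxt_lt ha) _ hb h2
      rcases nxt_cases n a with h | h <;> rcases nxt_cases n b with h' | h' <;> omega
  have cEP : EP.card = (Finset.univ.filter (fun v => d v ≠ 0)).card := by
    rw [hEP, Finset.card_image_of_injOn]
    intro a ha b hb h
    simp only [Finset.coe_filter, Finset.mem_univ, true_and, Set.mem_ofPred_eq] at ha hb
    rcases Sym2.eq_iff.1 h with ⟨h1, -⟩ | ⟨h1, h2⟩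
    · exact h1
    · have := (hp a ha).2
      have := (hp b hb).2
      rw [h2] at *
      rw [← h1] at *
      omega
  have cC : (Finset.univ.filter (fun v => d v = 0)).card = n := by
    have : Finset.univ.filter (fun v => d v = 0) = (Finset.range n).image c.getVert := by
      ext v
      simp [hd0]
    rw [this, Finset.card_image_of_injOn, Finset.card_range]
    intro a ha b hb h
    rw [Finset.mem_coe, Finset.mem_range] at ha hb
    exact hinj a ha b hb h
  have hdisj : Disjoint EC EP := by
    rw [Finset.disjoint_left]
    rintro s hs hs'
    obtain ⟨m, hm, rfl⟩ := Finset.mem_image.1 hs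
    obtain ⟨v, hv, h⟩ := Finset.mem_image.1 hs'
    rw [Finset.mem_range] at hm
    rw [Finset.mem_filter] at hv
    have hvm : v ∈ s(c.getVert m, c.getVert (nxt n m)) := h ▸ Sym2.mem_mk_left v (p v)
    rcases Sym2.mem_iff.1 hvm with h | h
    · exact hv.2 ((hd0 v).2 ⟨m, hm, h.symm⟩)
    · exact hv.2 ((hd0 v).2 ⟨_, nxt_lt hm, h.symm⟩)
  have hsub : EC ∪ EP ⊆ G.edgeFinset := by
    intro s hs
    rw [SimpleGraph.mem_edgeFinset]
    rcases Finset.mem_union.1 hs with hs | hs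
    · obtain ⟨m, hm, rfl⟩ := Finset.mem_image.1 hs
      exact hadj m (Finset.mem_range.1 hm)
    · obtain ⟨v, hv, rfl⟩ := Finset.mem_image.1 hs
      exact (hp v (Finset.mem_filter.1 hv).2).1
  have heq : EC ∪ EP = G.edgeFinset := by
    refine Finset.eq_of_subset_of_card_le hsub ?_
    rw [Finset.card_union_of_disjoint hdisj, hpseudo, cEC, cEP, ← cC,
      Finset.card_filter_add_card_filter_not, Finset.card_univ]
  refine ⟨c.getVert, d, p, ⟨hn, hinj, hd0, fun v hv => (hp v hv).2, ?_, ?_⟩, hd⟩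
  · intro u v
    constructor
    · intro h
      have hs : s(u, v) ∈ EC ∪ EP := by rw [heq, SimpleGraph.mem_edgeFinset]; exact h
      rcases Finset.mem_union.1 hs with hs | hs
      · obtain ⟨m, hm, h⟩ := Finset.mem_image.1 hs
        rw [Finset.mem_range] at hm
        left
        rcases Sym2.eq_iff.1 h with ⟨h1, h2⟩ | ⟨h1, h2⟩
        · exact ⟨m, hm, Or.inl ⟨h1.symm, h2.symm⟩⟩
        · exact ⟨m, hm, Or.inr ⟨h1.symm, h2.symm⟩⟩
      · obtain ⟨y, hy, h⟩ := Finset.mem_image.1 hs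
        have hy := (Finset.mem_filter.1 hy).2
        right
        rcases Sym2.eq_iff.1 h with ⟨rfl, h2⟩ | ⟨rfl, h2⟩
        · exact Or.inl ⟨hy, h2⟩
        · exact Or.inr ⟨hy, h2⟩
    · rintro (⟨m, hm, ⟨rfl, rfl⟩ | ⟨rfl, rfl⟩⟩ | ⟨h, rfl⟩ | ⟨h, rfl⟩)
      · exact hadj m hm
      · exact (hadj m hm).symm
      · exact (hp u h).1
      · exact (hp v h).1.symm
  · intro u v hu hv hw huv
    by_contra hne
    have hdeg := hhairball (p u) (fun h => hw ((hd _).2 h))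
    have h1 := (hp u hu).2
    have h2 := (hp v hv).2
    have h3 := (hp (p u) hw).2
    rw [← huv] at h2
    have hsub' : ({u, v, p (p u)} : Finset V) ⊆ G.neighborFinset (p u) := by
      intro y hy
      rw [SimpleGraph.mem_neighborFinset]
      simp only [Finset.mem_insert, Finset.mem_singleton] at hy
      rcases hy with rfl | rfl | rfl
      · exact (hp y hu).1.symm
      · rw [huv]; exact (hp y hv).1.symm
      · exact (hp _ hw).1
    have hcard := Finset.card_le_card hsub'
    rw [SimpleGraph.card_neighborFinset_eq_degree, Finset.card_insert_of_notMem,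
      Finset.card_insert_of_notMem, Finset.card_singleton] at hcard
    · omega
    · rw [Finset.mem_singleton]; rintro rfl; omega
    · simp only [Finset.mem_insert, Finset.mem_singleton, not_or]
      exact ⟨hne, by rintro h; rw [← h] at h3; omega⟩

end Transfer

/-! ### The tails of a hairball -/

section Data
variable {V : Type*} {G : SimpleGraph V} {n : ℕ} {cyc : ℕ → V} {d : V → ℕ} {p : V → V}

/-- The first vertex, adjacent to the cycle, of the tail containing `v`. -/
def top (d : V → ℕ) (p : V → V) (v : V) : V := p^[d v - 1] v

/-- The position of `v` on the cycle, with junk value `0` off the cycle. -/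
noncomputable def idx (n : ℕ) (cyc : ℕ → V) (v : V) : ℕ :=
  if h : ∃ m < n, cyc m = v then h.choose else 0

/-- The number of vertices of the tail with first vertex `i`; it is `0` if `i` is not adjacent
to the cycle from outside. -/
noncomputable def tailLen [Fintype V] (d : V → ℕ) (p : V → V) (i : V) : ℕ :=
  (Finset.univ.filter (fun v => d v ≠ 0 ∧ top d p v = i)).card

/-- The vertex of the model hairball corresponding to `v`; tails are indexed by their first
vertices. -/
noncomputable def code (n : ℕ) (cyc : ℕ → V) (d : V → ℕ) (p : V → V) (v : V) : ℕ ⊕ (V × ℕ) :=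
  if d v = 0 then Sum.inl (idx n cyc v) else Sum.inr (top d p v, d v - 1)

/-- The position of the cycle vertex to which the tail with first vertex `i` is attached. -/
noncomputable def root (n : ℕ) (cyc : ℕ → V) (p : V → V) (i : V) : ℕ := idx n cyc (p i)

theorem top_of_one {v : V} (h : d v = 1) : top d p v = v := by simp [top, h]

namespace IsHair

theorem idx_lt (H : IsHair G n cyc d p) (v : V) : idx n cyc v < n := by
  unfold idx
  split_ifs with h
  · exact h.choose_spec.1
  · have := H.three_le; omega

theorem idx_cyc (H : IsHair G n cyc d p) {m : ℕ} (hm : m < n) : idx n cyc (cyc m) = m := by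
  have h : ∃ m' < n, cyc m' = cyc m := ⟨m, hm, rfl⟩
  rw [idx, dif_pos h]
  exact H.cyc_inj _ h.choose_spec.1 _ hm h.choose_spec.2

theorem cyc_idx (H : IsHair G n cyc d p) {v : V} (hv : d v = 0) : cyc (idx n cyc v) = v := by
  obtain ⟨m, hm, rfl⟩ := (H.d_eq_zero v).1 hv
  rw [H.idx_cyc hm]

theorem d_cyc (H : IsHair G n cyc d p) {m : ℕ} (hm : m < n) : d (cyc m) = 0 :=
  (H.d_eq_zero _).2 ⟨m, hm, rfl⟩

theorem top_p (H : IsHair G n cyc d p) {v : V} (h : d (p v) ≠ 0) (hv : d v ≠ 0) :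
    top d p (p v) = top d p v := by
  have := H.d_p v hv
  obtain ⟨k, hk⟩ : ∃ k, d (p v) = k + 1 := Nat.exists_eq_succ_of_ne_zero h
  have hk' : d v = k + 2 := by omega
  simp [top, hk, hk']

theorem d_top (H : IsHair G n cyc d p) {v : V} (hv : d v ≠ 0) : d (top d p v) = 1 := by
  induction hk : d v using Nat.strong_induction_on generalizing v with
  | _ k ih =>
    have h1 := H.d_p v hv
    by_cases h0 : d (p v) = 0
    · have : d v = 1 := by omega
      rw [top_of_one this, this]
    · rw [← H.top_p h0 hv]
      exact ih _ (by omega) h0 rfl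

theorem eq_of_top (H : IsHair G n cyc d p) {u v : V} (hu : d u ≠ 0) (hd : d u = d v)
    (ht : top d p u = top d p v) : u = v := by
  induction hk : d u using Nat.strong_induction_on generalizing u v with
  | _ k ih =>
    have h1 := H.d_p u hu
    have h2 := H.d_p v (hd ▸ hu)
    by_cases h0 : d (p u) = 0
    · rwa [top_of_one (by omega), top_of_one (by omega)] at ht
    · have h0' : d (p v) ≠ 0 := by omega
      refine H.p_inj u v hu (hd ▸ hu) h0 (ih _ (by omega) h0 (by omega) ?_ rfl)
      rw [H.top_p h0 hu, H.top_p h0' (hd ▸ hu), ht]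

theorem p_eq_of_top (H : IsHair G n cyc d p) {u v : V} (hu : d u ≠ 0) (hv : d v = d u + 1)
    (ht : top d p u = top d p v) : p v = u := by
  have hv0 : d v ≠ 0 := by omega
  have := H.d_p v hv0
  have h0 : d (p v) ≠ 0 := by omega
  exact H.eq_of_top h0 (by omega) (by rw [H.top_p h0 hv0, ht])

theorem d_p_of_one (H : IsHair G n cyc d p) {v : V} (hv : d v = 1) : d (p v) = 0 := by
  have := H.d_p v (by omega); omega

theorem code_injective (H : IsHair G n cyc d p) : Function.Injective (code n cyc d p) := by
  intro u v h
  unfold code at h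
  by_cases hu : d u = 0 <;> by_cases hv : d v = 0 <;> simp [hu, hv] at h
  · rw [← H.cyc_idx hu, h, H.cyc_idx hv]
  · exact H.eq_of_top hu (by omega) h.1

variable [Fintype V]

/-- The depths occurring on a tail with `k` vertices are exactly `1, …, k`. -/
theorem lt_tailLen (H : IsHair G n cyc d p) {i : V} {k : ℕ} :
    k < tailLen d p i ↔ ∃ v, d v = k + 1 ∧ top d p v = i := by
  set S := Finset.univ.filter (fun v => d v ≠ 0 ∧ top d p v = i) with hS
  set D := S.image (fun v => d v - 1) with hD
  have hcard : D.card = tailLen d p i := by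
    rw [hD, Finset.card_image_of_injOn]
    · rfl
    · intro u hu v hv h
      simp only [hS, Finset.coe_filter, Finset.mem_univ, true_and, Set.mem_ofPred_eq] at hu hv
      exact H.eq_of_top hu.1 (by simp only at h; omega) (hu.2.trans hv.2.symm)
  have hmem : ∀ k, k ∈ D ↔ ∃ v, d v = k + 1 ∧ top d p v = i := by
    intro k
    simp only [hD, hS, Finset.mem_image, Finset.mem_filter, Finset.mem_univ, true_and]
    constructor
    · rintro ⟨v, ⟨h1, h2⟩, h3⟩
      exact ⟨v, by omega, h2⟩
    · rintro ⟨v, h1, h2⟩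
      exact ⟨v, ⟨by omega, h2⟩, by omega⟩
  have hdown : ∀ k, k + 1 ∈ D → k ∈ D := by
    intro k hk
    obtain ⟨v, h1, h2⟩ := (hmem _).1 hk
    have := H.d_p v (by omega)
    exact (hmem _).2 ⟨p v, by omega, by rw [H.top_p (by omega) (by omega), h2]⟩
  have hdown' : ∀ j k, k + j ∈ D → k ∈ D := by
    intro j
    induction j with
    | zero => exact fun k h => h
    | succ j ih => exact fun k h => ih k (hdown _ h)
  have hrange : D = Finset.range D.card := by
    refine Finset.eq_of_subset_of_card_le (fun k hk => ?_) (by simp)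
    have hsub : Finset.range (k + 1) ⊆ D := by
      intro j hj
      rw [Finset.mem_range] at hj
      exact hdown' (k - j) j (by rwa [show j + (k - j) = k by omega])
    have := Finset.card_le_card hsub
    rw [Finset.card_range] at this
    exact Finset.mem_range.2 (by omega)
  rw [← hmem, hrange, Finset.mem_range, ← hcard]

theorem tailLen_pos (H : IsHair G n cyc d p) {i : V} : 0 < tailLen d p i ↔ d i = 1 := by
  rw [H.lt_tailLen]
  constructor
  · rintro ⟨v, h1, rfl⟩
    exact H.d_top (by omega)
  · exact fun h => ⟨i, h, top_of_one h⟩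

theorem card_eq (H : IsHair G n cyc d p) : Fintype.card V = n + ∑ i, tailLen d p i := by
  have h1 : (Finset.univ.filter (fun v => d v = 0)).card = n := by
    have : Finset.univ.filter (fun v => d v = 0) = (Finset.range n).image cyc := by
      ext v
      simp [H.d_eq_zero]
    rw [this, Finset.card_image_of_injOn, Finset.card_range]
    intro a ha b hb h
    rw [Finset.mem_coe, Finset.mem_range] at ha hb
    exact H.cyc_inj a ha b hb h
  have h2 : (Finset.univ.filter (fun v => ¬ d v = 0)).card = ∑ i, tailLen d p i := by
    rw [Finset.card_eq_sum_card_fiberwise (f := top d p) (t := Finset.univ)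
      (fun _ _ => Finset.mem_coe.2 (Finset.mem_univ _))]
    refine Finset.sum_congr rfl fun i _ => ?_
    rw [tailLen, Finset.filter_filter]
  rw [← h1, ← h2, Finset.card_filter_add_card_filter_not, Finset.card_univ]

end IsHair
end Data

/-! ### Identification with the model and simplest form -/

section Identify
variable {V : Type*} {G : SimpleGraph V} {n : ℕ} {cyc : ℕ → V} {d : V → ℕ} {p : V → V}

namespace IsHair

theorem code_cyc (H : IsHair G n cyc d p) {m : ℕ} (hm : m < n) :
    code n cyc d p (cyc m) = Sum.inl m := by
  rw [code, if_pos (H.d_cyc hm), H.idx_cyc hm]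

theorem code_p (H : IsHair G n cyc d p) {v : V} (hv : d v ≠ 0) :
    code n cyc d p (p v) = node (root n cyc p) (top d p v) (d v - 1) := by
  have h1 := H.d_p v hv
  unfold code
  by_cases h0 : d (p v) = 0
  · have : d v = 1 := by omega
    rw [if_pos h0, this, top_of_one this]
    rfl
  · obtain ⟨k, hk⟩ : ∃ k, d (p v) = k + 1 := Nat.exists_eq_succ_of_ne_zero h0
    rw [if_neg h0, H.top_p h0 hv, show d v - 1 = k + 1 by omega, hk]
    rfl

variable [Fintype V]

/-- The complex of `G` is a relabelling of the model hairball. -/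
theorem map_graphComplex (H : IsHair G n cyc d p) :
    (graphComplex G).map (Finset.mapEmbedding ⟨code n cyc d p, H.code_injective⟩).toEmbedding
      = hair n (root n cyc p) (tailLen d p) := by
  have hmem : ∀ s : Finset V, s ∈ graphComplex G ↔
      (∃ v, s = {v}) ∨ ∃ u v, G.Adj u v ∧ s = {u, v} := by
    intro s
    simp [graphComplex, eq_comm]
  ext s
  rw [Finset.mem_map, mem_hair]
  constructor
  · rintro ⟨σ, hσ, rfl⟩
    rcases (hmem σ).1 hσ with ⟨v, rfl⟩ | ⟨u, v, huv, rfl⟩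
    · by_cases hv : d v = 0
      · refine Or.inl ⟨idx n cyc v, H.idx_lt v, ?_⟩
        simp [Finset.mapEmbedding_apply, code, hv]
      · refine Or.inr (Or.inl ⟨top d p v, d v - 1, H.lt_tailLen.2 ⟨v, by omega, rfl⟩, ?_⟩)
        simp [Finset.mapEmbedding_apply, code, hv]
    · have key : ∀ v, d v ≠ 0 → ({code n cyc d p (p v), code n cyc d p v} : Finset _)
          = {node (root n cyc p) (top d p v) (d v - 1), Sum.inr (top d p v, d v - 1)} := by
        intro v hv
        rw [H.code_p hv, code, if_neg hv]
      right; right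
      simp only [RelEmbedding.coe_toEmbedding, Finset.mapEmbedding_apply, Finset.map_insert,
        Finset.map_singleton, Function.Embedding.coeFn_mk]
      rcases (H.adj_iff u v).1 huv with ⟨m, hm, ⟨rfl, rfl⟩ | ⟨rfl, rfl⟩⟩ | ⟨h, rfl⟩ | ⟨h, rfl⟩
      · exact Or.inl ⟨m, hm, by rw [H.code_cyc hm, H.code_cyc (nxt_lt hm)]⟩
      · exact Or.inl ⟨m, hm, by rw [H.code_cyc hm, H.code_cyc (nxt_lt hm), Finset.pair_comm]⟩
      · exact Or.inr ⟨top d p u, d u - 1, H.lt_tailLen.2 ⟨u, by omega, rfl⟩, by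
          rw [← key u h, Finset.pair_comm]⟩
      · exact Or.inr ⟨top d p v, d v - 1, H.lt_tailLen.2 ⟨v, by omega, rfl⟩, by
          rw [← key v h]⟩
  · rintro (⟨m, hm, rfl⟩ | ⟨i, k, hk, rfl⟩ | ⟨m, hm, rfl⟩ | ⟨i, k, hk, rfl⟩)
    · refine ⟨{cyc m}, (hmem _).2 (Or.inl ⟨_, rfl⟩), ?_⟩
      simp [Finset.mapEmbedding_apply, H.code_cyc hm]
    · obtain ⟨v, hv, rfl⟩ := H.lt_tailLen.1 hk
      refine ⟨{v}, (hmem _).2 (Or.inl ⟨_, rfl⟩), ?_⟩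
      simp [Finset.mapEmbedding_apply, code, hv]
    · refine ⟨{cyc m, cyc (nxt n m)}, (hmem _).2 (Or.inr ⟨_, _, (H.adj_iff _ _).2
        (Or.inl ⟨m, hm, Or.inl ⟨rfl, rfl⟩⟩), rfl⟩), ?_⟩
      simp [Finset.mapEmbedding_apply, H.code_cyc hm, H.code_cyc (nxt_lt hm)]
    · obtain ⟨v, hv, rfl⟩ := H.lt_tailLen.1 hk
      have hv0 : d v ≠ 0 := by omega
      refine ⟨{p v, v}, (hmem _).2 (Or.inr ⟨_, _, (H.adj_iff _ _).2
        (Or.inr (Or.inr ⟨hv0, rfl⟩)), rfl⟩), ?_⟩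
      simp only [RelEmbedding.coe_toEmbedding, Finset.mapEmbedding_apply, Finset.map_insert,
        Finset.map_singleton, Function.Embedding.coeFn_mk]
      rw [H.code_p hv0, code, if_neg hv0, hv, Nat.add_sub_cancel]

/-- The nim-value of `G` in terms of its tails; a vertex `i` not adjacent to the cycle contributes an
empty tail. -/
theorem grundy_eq [inst : DecidableEq V] (H : IsHair G n cyc d p) (hodd : n % 2 = 1) :
    grundy (graphComplex G) = hairVal (tails (root n cyc p) (tailLen d p)) := by
  have hroot : ∀ i, root n cyc p i < n := fun i => H.idx_lt _
  obtain rfl : inst = fun a b => Classical.propDecidable (a = b) := Subsingleton.elim _ _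
  rw [← grundy_hair H.three_le hodd hroot, ← H.map_graphComplex, grundy_map]

variable [DecidableEq V]

/-- In simplest form no two tails of equal length share their root: otherwise exchanging the
two tails would be an involution. -/
theorem eq_of_tailLen (H : IsHair G n cyc d p) (hs : SimplestForm G) {i j : V} (hi : d i = 1)
    (hp : p i = p j) (hlen : tailLen d p i = tailLen d p j) : i = j := by
  by_contra hij
  have hdsw : ∀ v, tailLen d p (Equiv.swap i j v) = tailLen d p v := by
    intro v
    rw [Equiv.swap_apply_def]
    split_ifs with h1 h2
    · rw [h1, hlen]
    · rw [h2, hlen]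
    · rfl
  have hex : ∀ v, ∃ w, d w = d v ∧ (d v = 0 → w = v) ∧
      (d v ≠ 0 → top d p w = Equiv.swap i j (top d p v)) := by
    intro v
    by_cases hv : d v = 0
    · exact ⟨v, rfl, fun _ => rfl, fun h => absurd hv h⟩
    · have hlt : d v - 1 < tailLen d p (Equiv.swap i j (top d p v)) := by
        rw [hdsw]
        exact H.lt_tailLen.2 ⟨v, by omega, rfl⟩
      obtain ⟨w, h1, h2⟩ := H.lt_tailLen.1 hlt
      exact ⟨w, by omega, fun h => absurd h hv, fun _ => h2⟩
  choose f fd f0 ft using hex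
  have huniq : ∀ v w, d w = d v → (d v = 0 → w = v) →
      (d v ≠ 0 → top d p w = Equiv.swap i j (top d p v)) → f v = w := by
    intro v w h1 h2 h3
    by_cases hv : d v = 0
    · rw [f0 v hv, h2 hv]
    · exact H.eq_of_top (by rwa [fd]) (by rw [fd, h1]) (by rw [ft v hv, h3 hv])
  have hff : ∀ v, f (f v) = v := by
    intro v
    refine huniq _ _ (fd v).symm (fun h => ?_) (fun h => ?_)
    · rw [fd] at h; exact (f0 v h).symm
    · rw [fd] at h; rw [ft v h, Equiv.swap_apply_self]
  have hfp : ∀ v, d v ≠ 0 → f (p v) = p (f v) := by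
    intro v hv
    have h1 := H.d_p v hv
    have hv' : d (f v) ≠ 0 := by rwa [fd]
    have h2 := H.d_p (f v) hv'
    rw [fd] at h2
    refine huniq _ _ (by omega) (fun h => ?_) (fun h => ?_)
    · have hd1 : d v = 1 := by omega
      have h3 := ft v hv
      rw [top_of_one hd1, top_of_one (by rw [fd, hd1])] at h3
      rw [h3, Equiv.swap_apply_def]
      split_ifs with e1 e2
      · rw [e1, hp]
      · rw [e2, hp]
      · rfl
    · rw [H.top_p (by omega) hv', H.top_p h hv, ft v hv]
  have hcyc : ∀ m < n, f (cyc m) = cyc m := fun m hm => f0 _ (H.d_cyc hm)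
  have hone := hs ⟨f, f, hff, hff⟩ (by ext v; simp [pow_two, hff]) ?_ ?_
  · have h1 : f i = i := by
      have := DFunLike.congr_fun hone i
      simpa using this
    have h2 := ft i (by omega)
    rw [h1, top_of_one hi, Equiv.swap_apply_left] at h2
    exact hij h2
  · intro u v huv
    simp only [Equiv.coe_fn_mk]
    rw [H.adj_iff]
    rcases (H.adj_iff u v).1 huv with ⟨m, hm, h⟩ | ⟨h, rfl⟩ | ⟨h, rfl⟩
    · refine Or.inl ⟨m, hm, ?_⟩
      rcases h with ⟨rfl, rfl⟩ | ⟨rfl, rfl⟩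
      · exact Or.inl ⟨hcyc m hm, hcyc _ (nxt_lt hm)⟩
      · exact Or.inr ⟨hcyc m hm, hcyc _ (nxt_lt hm)⟩
    · exact Or.inr (Or.inl ⟨by rwa [fd], (hfp u h).symm⟩)
    · exact Or.inr (Or.inr ⟨by rwa [fd], (hfp v h).symm⟩)
  · have key : ∀ v, d v ≠ 0 → f v ∈ ({p v, v} : Finset V) → f v = v ∧ f (p v) = p v := by
      intro v hv h
      have h1 := H.d_p v hv
      rcases Finset.mem_insert.1 h with h | h
      · have := fd v
        rw [h] at this
        omega
      · rw [Finset.mem_singleton] at h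
        exact ⟨h, by rw [hfp v hv, h]⟩
    intro u v huv hfix
    simp only [Equiv.coe_fn_mk] at hfix ⊢
    rcases (H.adj_iff u v).1 huv with ⟨m, hm, ⟨rfl, rfl⟩ | ⟨rfl, rfl⟩⟩ | ⟨h, rfl⟩ | ⟨h, rfl⟩
    · exact ⟨hcyc m hm, hcyc _ (nxt_lt hm)⟩
    · exact ⟨hcyc _ (nxt_lt hm), hcyc m hm⟩
    · exact key u h (by rw [Finset.pair_comm, ← hfix]; simp)
    · exact (key v h (by rw [← hfix]; simp)).symm

/-- In simplest form no cancellation takes place in `tails`. -/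
theorem tails_apply_root (H : IsHair G n cyc d p) (hs : SimplestForm G) {i : V} (hi : d i = 1) :
    tails (root n cyc p) (tailLen d p) (root n cyc p i, tailLen d p i) = 1 := by
  rw [tails, Finsupp.finsetSum_apply, Finset.sum_eq_single i]
  · rw [tl_apply, if_pos ⟨rfl, rfl, (H.tailLen_pos.2 hi).ne'⟩]
  · intro j _ hj
    rw [tl_apply, if_neg]
    rintro ⟨h1, h2, h3⟩
    have hdj : d j = 1 := H.tailLen_pos.1 (Nat.pos_of_ne_zero h3)
    refine hj (H.eq_of_tailLen hs hdj ?_ h2)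
    rw [← H.cyc_idx (H.d_p_of_one hdj), ← H.cyc_idx (H.d_p_of_one hi)]
    exact congrArg cyc h1
  · exact fun h => absurd (Finset.mem_univ i) h

end IsHair
end Identify

/-! ### The two-tail configuration -/

section TwoTails
variable {V : Type*} {G : SimpleGraph V} {n : ℕ} {cyc : ℕ → V} {d : V → ℕ} {p : V → V}

namespace IsHair

/-- A path that leaves the cycle at its first vertex runs down a single tail. -/
theorem path_tail (H : IsHair G n cyc d p) {A u : V} (P : G.Walk A u) (hP : P.IsPath)
    (hA : d A = 0) (hPA : ∀ y ∈ P.support, d y = 0 → y = A) (m : ℕ) (hm : m + 1 ≤ P.length) :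
    d (P.getVert (m + 1)) = m + 1 ∧ p (P.getVert (m + 1)) = P.getVert m ∧
      top d p (P.getVert (m + 1)) = P.getVert 1 := by
  have hinj : ∀ a ≤ P.length, ∀ b ≤ P.length, P.getVert a = P.getVert b → a = b :=
    fun a ha b hb h => hP.getVert_injOn ha hb h
  have hne : d (P.getVert (m + 1)) ≠ 0 := by
    intro h
    have := hPA _ (P.getVert_mem_support _) h
    have := hinj _ hm 0 (by omega) (this.trans P.getVert_zero.symm)
    omega
  have hadj := P.adj_getVert_succ (i := m) (by omega)
  induction m with
  | zero =>
    have hp : p (P.getVert 1) = P.getVert 0 := by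
      rcases (H.adj_iff _ _).1 hadj with ⟨m, hm, ⟨-, h⟩ | ⟨h, -⟩⟩ | ⟨h, -⟩ | ⟨-, h⟩
      · exact absurd (h ▸ H.d_cyc (nxt_lt hm)) hne
      · exact absurd (h ▸ H.d_cyc hm) hne
      · rw [P.getVert_zero] at h; exact absurd hA h
      · exact h
    have hd := H.d_p _ hne
    rw [zero_add, hp, P.getVert_zero, hA] at hd
    exact ⟨hd.symm, hp, top_of_one hd.symm⟩
  | succ m ih =>
    have hne' : d (P.getVert (m + 1)) ≠ 0 := by
      intro h
      have := hPA _ (P.getVert_mem_support _) h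
      have := hinj _ (by omega) 0 (by omega) (this.trans P.getVert_zero.symm)
      omega
    obtain ⟨ih1, ih2, ih3⟩ := ih (by omega) hne' (P.adj_getVert_succ (i := m) (by omega))
    have hp : p (P.getVert (m + 1 + 1)) = P.getVert (m + 1) := by
      rcases (H.adj_iff _ _).1 hadj with ⟨m, hm, ⟨-, h⟩ | ⟨h, -⟩⟩ | ⟨-, h⟩ | ⟨-, h⟩
      · exact absurd (h ▸ H.d_cyc (nxt_lt hm)) hne
      · exact absurd (h ▸ H.d_cyc hm) hne
      · rw [ih2] at h
        have := hinj _ (by omega) _ (by omega) h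
        omega
      · exact h
    have hd := H.d_p _ hne
    rw [hp, ih1] at hd
    refine ⟨hd.symm, hp, ?_⟩
    rw [← H.top_p (by rwa [hp]) hne, hp, ih3]

/-- A cycle vertex without a tail has degree `2`. -/
theorem degree_eq_two (H : IsHair G n cyc d p) {v : V} (hv : d v = 0)
    (hno : ∀ w, d w ≠ 0 → p w ≠ v) [Fintype (G.neighborSet v)] : G.degree v = 2 := by
  have hn := H.three_le
  obtain ⟨m, hm, rfl⟩ := (H.d_eq_zero v).1 hv
  obtain ⟨b, hb, hbm⟩ : ∃ b < n, nxt n b = m := by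
    by_cases h : m = 0
    · exact ⟨n - 1, by omega, by rcases nxt_cases n (n - 1) with h' | h' <;> omega⟩
    · exact ⟨m - 1, by omega, by rcases nxt_cases n (m - 1) with h' | h' <;> omega⟩
  have hset : G.neighborFinset (cyc m) = {cyc (nxt n m), cyc b} := by
    ext w
    rw [SimpleGraph.mem_neighborFinset, Finset.mem_insert, Finset.mem_singleton, H.adj_iff]
    constructor
    · rintro (⟨a, ha, ⟨h1, h2⟩ | ⟨h1, h2⟩⟩ | ⟨h, -⟩ | ⟨h, h'⟩)
      · rw [← H.cyc_inj _ hm _ ha h1] at h2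
        exact Or.inl h2
      · right
        have h3 := H.cyc_inj _ hm _ (nxt_lt ha) h2
        have : a = b := by
          rcases nxt_cases n a with h | h <;> rcases nxt_cases n b with h' | h' <;> omega
        rw [h1, this]
      · exact absurd hv h
      · exact absurd h' (hno w h)
    · rintro (rfl | rfl)
      · exact Or.inl ⟨m, hm, Or.inl ⟨rfl, rfl⟩⟩
      · exact Or.inl ⟨b, hb, Or.inr ⟨rfl, by rw [hbm]⟩⟩
  rw [← SimpleGraph.card_neighborFinset_eq_degree, hset, Finset.card_pair]
  intro h
  have := H.cyc_inj _ (nxt_lt hm) _ hb h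
  rcases nxt_cases n m with h | h <;> rcases nxt_cases n b with h' | h' <;> omega

variable [Fintype V]

/-- In the two-tail configuration the two paths account for all the tails. -/
theorem special_of_hasTwoTails (H : IsHair G n cyc d p) {x : V} (c : G.Walk x x)
    (hd : ∀ v, d v = 0 ↔ v ∈ c.support) (h : HasTwoTails G c) :
    Special (tails (root n cyc p) (tailLen d p)) := by
  obtain ⟨A, k, u, w, P, Q, hA, -, hP, hQ, hPk, hQk, hPc, hQc, hPQ, hcov⟩ := h
  have hA0 : d A = 0 := (hd A).2 hA
  have tP := H.path_tail P hP hA0 (fun y hy h => hPc y hy ((hd y).1 h))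
  have tQ := H.path_tail Q hQ hA0 (fun y hy h => hQc y hy ((hd y).1 h))
  have hcov' : ∀ y, d y ≠ 0 → (∃ m < k, y = P.getVert (m + 1)) ∨
      (∃ m < k + 1, y = Q.getVert (m + 1)) := by
    have aux : ∀ {z : V} (R : G.Walk A z) (y : V), d y ≠ 0 → y ∈ R.support →
        ∃ m < R.length, y = R.getVert (m + 1) := by
      intro z R y hy hmem
      obtain ⟨m, rfl, hm⟩ := SimpleGraph.Walk.mem_support_iff_exists_getVert.1 hmem
      cases m with
      | zero => rw [R.getVert_zero] at hy; exact absurd hA0 hy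
      | succ m => exact ⟨m, hm, rfl⟩
    intro y hy
    rcases hcov y with h | h | h
    · exact absurd ((hd y).2 h) hy
    · exact Or.inl (hPk ▸ aux P y hy h)
    · exact Or.inr (hQk ▸ aux Q y hy h)
  obtain ⟨q1, q2, q3⟩ := tQ 0 (by omega)
  simp only [zero_add, Q.getVert_zero] at q1 q2 q3
  have hne : 0 < k → P.getVert 1 ≠ Q.getVert 1 := by
    intro hk h
    have := hPQ _ (P.getVert_mem_support 1) (h ▸ Q.getVert_mem_support 1)
    rw [h] at this
    rw [this] at q1
    omega
  have lQ : tailLen d p (Q.getVert 1) = k + 1 := by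
    refine le_antisymm (not_lt.1 fun hlt => ?_) (Nat.succ_le_of_lt ?_)
    · obtain ⟨v, h1, h2⟩ := H.lt_tailLen.1 hlt
      rcases hcov' v (by omega) with ⟨m, hm, rfl⟩ | ⟨m, hm, rfl⟩
      · rw [(tP m (by omega)).2.2] at h2
        exact hne (by omega) h2
      · rw [(tQ m (by omega)).1] at h1
        omega
    · exact H.lt_tailLen.2 ⟨_, (tQ k (by omega)).1, (tQ k (by omega)).2.2⟩
  have hzero : ∀ i, i ≠ Q.getVert 1 → (0 < k → i ≠ P.getVert 1) → tailLen d p i = 0 := by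
    intro i h1 h2
    by_contra h0
    have hi := H.tailLen_pos.1 (Nat.pos_of_ne_zero h0)
    rcases hcov' i (by omega) with ⟨m, hm, rfl⟩ | ⟨m, hm, rfl⟩
    · rw [(tP m (by omega)).1] at hi
      obtain rfl : m = 0 := by omega
      exact h2 hm rfl
    · rw [(tQ m (by omega)).1] at hi
      obtain rfl : m = 0 := by omega
      exact h1 rfl
  refine ⟨idx n cyc A, k, ?_⟩
  by_cases hk : k = 0
  · rw [hk, tl_zero, zero_add, tails, Fintype.sum_eq_single (Q.getVert 1), lQ, root, q2, hk]
    intro i hi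
    rw [hzero i hi (fun h => absurd hk h.ne'), tl_zero]
  · have hk' : 0 < k := Nat.pos_of_ne_zero hk
    obtain ⟨p1, p2, p3⟩ := tP 0 (by omega)
    simp only [zero_add, P.getVert_zero] at p1 p2 p3
    have lP : tailLen d p (P.getVert 1) = k := by
      refine le_antisymm (not_lt.1 fun hlt => ?_) (not_lt.1 fun hlt => ?_)
      · obtain ⟨v, h1, h2⟩ := H.lt_tailLen.1 hlt
        rcases hcov' v (by omega) with ⟨m, hm, rfl⟩ | ⟨m, hm, rfl⟩
        · rw [(tP m (by omega)).1] at h1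
          omega
        · rw [(tQ m (by omega)).2.2] at h2
          exact hne hk' h2.symm
      · exact lt_irrefl _ (H.lt_tailLen.2 ⟨_, (tP _ (by omega)).1, (tP _ (by omega)).2.2⟩)
    rw [tails, Fintype.sum_eq_add (P.getVert 1) (Q.getVert 1) (hne hk'), lP, lQ, root, root, p2, q2]
    rintro i ⟨h1, h2⟩
    rw [hzero i h2 (fun _ => h1), tl_zero]

/-- The path from the cycle down the first `m` vertices of the tail with first vertex `i`. -/
theorem exists_path (H : IsHair G n cyc d p) {i A : V} (hi : d i = 1) (hiA : p i = A) (m : ℕ)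
    (hm : m ≤ tailLen d p i) :
    ∃ (u : V) (P : G.Walk A u), P.IsPath ∧ P.length = m ∧ d u = m ∧
      (∀ y ∈ P.support, d y ≤ m ∧ (y = A ∨ (d y ≠ 0 ∧ top d p y = i))) ∧
      (∀ y, d y ≠ 0 → top d p y = i → d y ≤ m → y ∈ P.support) := by
  have hpi := H.d_p_of_one hi
  rw [hiA] at hpi
  induction m with
  | zero =>
    refine ⟨A, SimpleGraph.Walk.nil, SimpleGraph.Walk.IsPath.nil, rfl, hpi, ?_, ?_⟩
    · intro y hy
      rw [SimpleGraph.Walk.support_nil, List.mem_singleton] at hy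
      rw [hy, hpi]
      exact ⟨le_rfl, Or.inl rfl⟩
    · intro y h1 _ h2
      omega
  | succ m ih =>
    obtain ⟨u, P, h1, h2, h3, h4, h5⟩ := ih (by omega)
    obtain ⟨v, hv, htv⟩ := H.lt_tailLen.1 (show m < tailLen d p i by omega)
    have hv0 : d v ≠ 0 := by omega
    have hpv : p v = u := by
      rcases (h4 u P.end_mem_support).2 with h | ⟨h, h'⟩
      · have : m = 0 := by rw [h, hpi] at h3; omega
        have hv1 : d v = 1 := by omega
        rw [top_of_one hv1] at htv
        rw [htv, h, hiA]
      · exact H.p_eq_of_top h (by omega) (h'.trans htv.symm)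
    have hadj : G.Adj u v := (H.adj_iff u v).2 (Or.inr (Or.inr ⟨hv0, hpv⟩))
    have hnot : v ∉ P.support := fun h => by have := (h4 v h).1; omega
    refine ⟨v, P.concat hadj, h1.concat hnot hadj, ?_, hv, ?_, ?_⟩
    · rw [SimpleGraph.Walk.length_concat, h2]
    · intro y hy
      rw [SimpleGraph.Walk.support_concat, List.mem_append,
        List.mem_singleton] at hy
      rcases hy with hy | rfl
      · exact ⟨by have := (h4 y hy).1; omega, (h4 y hy).2⟩
      · exact ⟨hv.le, Or.inr ⟨hv0, htv⟩⟩
    · intro y hy0 hty hy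
      rw [SimpleGraph.Walk.support_concat, List.mem_append,
        List.mem_singleton]
      by_cases hym : d y ≤ m
      · exact Or.inl (h5 y hy0 hty hym)
      · exact Or.inr (H.eq_of_top hy0 (by omega) (hty.trans htv.symm))

/-- Conversely, in simplest form `tails` determines the tails of `G`, so that a special class
comes from exactly two tails. -/
theorem hasTwoTails_of_special [DecidableEq V] (H : IsHair G n cyc d p) (hs : SimplestForm G)
    {x : V} (c : G.Walk x x) (hd : ∀ v, d v = 0 ↔ v ∈ c.support)
    (h : Special (tails (root n cyc p) (tailLen d p))) : HasTwoTails G c := by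
  obtain ⟨a, k, hT⟩ := h
  have happ : ∀ k', tails (root n cyc p) (tailLen d p) (a, k') ≠ 0 →
      ∃ i, d i = 1 ∧ p i = cyc a ∧ tailLen d p i = k' := by
    intro k' hk'
    obtain ⟨i, h1, h2, h3⟩ := exists_tail hk'
    have hi : d i = 1 := H.tailLen_pos.1 (h2 ▸ h3)
    refine ⟨i, hi, ?_, h2⟩
    rw [← h1, root, H.cyc_idx (H.d_p_of_one hi)]
  obtain ⟨i, hi1, hi2, hi3⟩ := happ (k + 1) (by rw [hT]; simp [tl_apply])
  have hA0 : d (cyc a) = 0 := by rw [← hi2]; exact H.d_p_of_one hi1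
  -- every tail sits at `cyc a` and has length `k` or `k + 1`
  have hall : ∀ j, d j = 1 → p j = cyc a ∧ (tailLen d p j = k ∨ tailLen d p j = k + 1) := by
    intro j hj
    have h1 := H.tails_apply_root hs hj
    rw [hT, Finsupp.add_apply, tl_apply, tl_apply] at h1
    have h2 : a = root n cyc p j ∧ (tailLen d p j = k ∨ tailLen d p j = k + 1) := by
      by_cases e1 : a = root n cyc p j ∧ k = tailLen d p j ∧ k ≠ 0
      · exact ⟨e1.1, Or.inl e1.2.1.symm⟩
      · by_cases e2 : a = root n cyc p j ∧ k + 1 = tailLen d p j ∧ k + 1 ≠ 0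
        · exact ⟨e2.1, Or.inr e2.2.1.symm⟩
        · rw [if_neg e1, if_neg e2] at h1
          exact absurd h1 (by decide)
    refine ⟨?_, h2.2⟩
    rw [h2.1, root, H.cyc_idx (H.d_p_of_one hj)]
  have hdeg : ∀ v ∈ c.support, v ≠ cyc a → ∀ [Fintype (G.neighborSet v)], G.degree v = 2 := by
    intro v hv hva _
    have hv0 := (hd v).2 hv
    refine H.degree_eq_two hv0 (fun w hw hpw => hva ?_)
    have h1 := H.d_p w hw
    rw [hpw, hv0] at h1
    rw [← hpw, (hall w h1.symm).1]
  obtain ⟨w, Q, hQ1, hQ2, -, hQ4, hQ5⟩ := H.exists_path hi1 hi2 (k + 1) hi3.ge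
  have hle : ∀ y, d y ≠ 0 → d y ≤ tailLen d p (top d p y) := by
    intro y hy
    have : d y - 1 < tailLen d p (top d p y) := H.lt_tailLen.2 ⟨y, by omega, rfl⟩
    omega
  obtain ⟨u, P, hP1, hP2, hP4, hP5⟩ : ∃ (u : V) (P : G.Walk (cyc a) u), P.IsPath ∧ P.length = k ∧
      (∀ y ∈ P.support, y = cyc a ∨ (d y ≠ 0 ∧ top d p y ≠ i)) ∧
      (∀ y, d y ≠ 0 → top d p y ≠ i → y ∈ P.support) := by
    -- a tail other than the one at `i` has exactly `k` vertices
    have hother : ∀ y, d y ≠ 0 → top d p y ≠ i → tailLen d p (top d p y) = k := by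
      intro y hy hyi
      have h1 := hall _ (H.d_top hy)
      refine h1.2.resolve_right fun h2 => hyi ?_
      exact H.eq_of_tailLen hs (H.d_top hy) (h1.1.trans hi2.symm) (h2.trans hi3.symm)
    by_cases hk : k = 0
    · refine ⟨cyc a, SimpleGraph.Walk.nil, SimpleGraph.Walk.IsPath.nil, hk.symm, ?_, ?_⟩
      · intro y hy
        rw [SimpleGraph.Walk.support_nil, List.mem_singleton] at hy
        exact Or.inl hy
      · intro y hy hyi
        have h1 := hother y hy hyi
        have h2 := H.tailLen_pos.2 (H.d_top hy)
        omega
    · obtain ⟨j, hj1, hj2, hj3⟩ := happ k (by rw [hT]; simp [tl_apply, hk])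
      have hji : j ≠ i := by rintro rfl; omega
      obtain ⟨u, P, hP1, hP2, -, hP4, hP5⟩ := H.exists_path hj1 hj2 k hj3.ge
      refine ⟨u, P, hP1, hP2, fun y hy => ?_, fun y hy hyi => ?_⟩
      · exact (hP4 y hy).2.imp_right fun h => ⟨h.1, by rw [h.2]; exact hji⟩
      · have h1 := hother y hy hyi
        have h2 : top d p y = j :=
          H.eq_of_tailLen hs (H.d_top hy) ((hall _ (H.d_top hy)).1.trans hj2.symm)
            (h1.trans hj3.symm)
        exact hP5 y hy h2 (h1 ▸ hle y hy)
  refine ⟨cyc a, k, u, w, P, Q, (hd _).1 hA0, hdeg, hP1, hQ1, hP2, hQ2, ?_, ?_, ?_, ?_⟩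
  · intro y hy hyc
    exact (hP4 y hy).resolve_right fun h => h.1 ((hd y).2 hyc)
  · intro y hy hyc
    exact (hQ4 y hy).2.resolve_right fun h => h.1 ((hd y).2 hyc)
  · intro y hy hy'
    exact (hP4 y hy).elim id fun h => (hQ4 y hy').2.resolve_right fun h' => h.2 h'.2
  · intro y
    by_cases hy : d y = 0
    · exact Or.inl ((hd y).1 hy)
    · by_cases hyi : top d p y = i
      · exact Or.inr (Or.inr (hQ5 y hy hyi (by rw [← hi3, ← hyi]; exact hle y hy)))
      · exact Or.inr (Or.inl (hP5 y hy hyi))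

end IsHair
end TwoTails

/-- Let `G` be a hairball (a pseudotree in which every vertex off the
cycle has degree at most `2`) in simplest form, whose cycle `c` has odd length, and which is
not itself just a cycle.  Then: (1) if `v(G)` is even and `G` consists of the cycle together
with a `k`-tail and a `(k+1)`-tail attached at a single cycle vertex `A` (all other cycle
vertices having degree `2`), then `g(G) = 4`; (2) if `v(G)` is even and `G` is not of that
form, then `g(G) = 0`; (3) if `v(G)` is odd, then `g(G) = 3`. -/
theorem grundy_hairball {V : Type*} [Fintype V] [DecidableEq V]
    (G : SimpleGraph V) [DecidableRel G.Adj]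
    (hconn : G.Connected) (hpseudo : G.edgeFinset.card = Fintype.card V)
    (hsimplest : SimplestForm G)
    (x : V) (c : G.Walk x x) (hc : c.IsCycle) (hodd : Odd c.length)
    (hhairball : ∀ v : V, v ∉ c.support → G.degree v ≤ 2)
    (hnotcycle : ∃ v : V, v ∉ c.support) :
    (Even (Fintype.card V) → HasTwoTails G c → grundy (graphComplex G) = 4) ∧
    (Even (Fintype.card V) → ¬ HasTwoTails G c → grundy (graphComplex G) = 0) ∧
    (Odd (Fintype.card V) → grundy (graphComplex G) = 3) := by
  obtain ⟨cyc, d, p, H, hd⟩ := exists_isHair hconn hpseudo c hc hhairball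
  have hn : c.length % 2 = 1 := Nat.odd_iff.1 hodd
  rw [H.grundy_eq hn, H.card_eq]
  set T := tails (root c.length cyc p) (tailLen d p) with hT
  have hlen : lenPar T = ((∑ i, tailLen d p i : ℕ) : ZMod 2) := lenPar_tails _ _
  have hpar := natCast_two (∑ i, tailLen d p i)
  have hT0 : T ≠ 0 := by
    obtain ⟨v, hv⟩ := hnotcycle
    have h1 := H.tails_apply_root hsimplest (H.d_top fun h => hv ((hd v).1 h))
    intro h0
    rw [← hT, h0] at h1
    exact zero_ne_one h1
  have hodd_len : Even (c.length + ∑ i, tailLen d p i) → lenPar T = 1 := by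
    intro he
    rw [Nat.even_iff] at he
    rw [hlen]
    rcases hpar with h | h
    · omega
    · exact h.1
  refine ⟨fun _ h2 => ?_, fun he h2 => ?_, fun ho => ?_⟩
  · rw [hairVal, if_neg hT0, if_pos (H.special_of_hasTwoTails c hd h2)]
  · rw [hairVal, if_neg hT0, if_neg fun hs => h2 (H.hasTwoTails_of_special hsimplest c hd hs),
      hodd_len he, if_neg one_ne_zero]
  · refine hairVal_of_ne ?_ hT0
    rw [Nat.odd_iff] at ho
    rw [hlen]
    rcases hpar with h | h
    · exact h.1
    · omega
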